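/- arXiv:1508.00232 — 2 statements merged into one kernel-verified Lean document; each statement's English description precedes it below -/
import Mathlib

section
/- Let γ > 0. Consider the statements: (i) Σ_K is mean square stable and ‖Σ_K‖∞² < γ; (ii) Σ̄_K is mean square stable and ‖Σ̄_K‖∞² < γ, where the H∞ norm of Σ̄_K is defined analogously using θ in place of r̄ and disturbances adapted to the filtration generated by θ; (iii) there exist matrices G_χ, H_χ, X_χ, Z_{χ,χ'} ∈ ℝ^{n×n} (χ, χ' ∈ 𝔛) such that for all χ, χ' ∈ 𝔛 the symmetric block matrix with diagonal blocks G_χ + G_χᵀ − X_χ, γ I_q, H_χ + H_χᵀ − F̄_χ(Z), I_ℓ, with sub-diagonal blocks (3,1) = A_{K,χ} G_χ, (3,2) = E_{K,χ}, (4,1) = C_{K,χ} G_χ, all other off-diagonal blocks zero (and the corresponding transposed blocks above the diagonal), is positive definite, and the symmetric block matrix [[Z_{χ,χ'}, H_χᵀ],[H_χ, X_{χ'}]] is positive definite. Then (i) and (ii) are equivalent, and (iii) implies both (i) and (ii). -/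
open MeasureTheory ProbabilityTheory Matrix

noncomputable section

/-- The state space `[N] × [M] × [N] × [T]` of the extended process `r̄`.
`Fin N`, `Fin M`, `Fin T` play the roles of `[N] = {1,…,N}`, `[M]`, `[T]`
(with `Fin T` being the 0-indexed version of `[T] = {1,…,T}`, i.e. `δ ∈ [T]`
corresponds to `δ - 1 : Fin T`). -/
abbrev XT (NN MM T : ℕ) : Type := Fin NN × Fin MM × Fin NN × Fin T

/-- `X` is a time-homogeneous Markov chain with transition probability matrix `P`:
for every `k`, every state `j` and every sequence of states `i`,
`Pr(X(k+1) = j ∧ X(l) = i l for all l ≤ k) = P (i k) j * Pr(X(l) = i l for all l ≤ k)`. -/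
def IsMarkovChain {Ω : Type} {_mΩ : MeasurableSpace Ω} (μ : Measure Ω) {S : Type}
    (X : ℕ → Ω → S) (P : S → S → ℝ) : Prop :=
  ∀ (k : ℕ) (j : S) (i : ℕ → S),
    (μ {ω | X (k + 1) ω = j ∧ ∀ l ≤ k, X l ω = i l}).toReal
      = P (i k) j * (μ {ω | ∀ l ≤ k, X l ω = i l}).toReal

/-- `⌊m⌋_T`, the unique element of `{0,…,T-1}` congruent to `m` modulo `T`, as `Fin T`. -/
def intToFin (T : ℕ) [NeZero T] (a : ℤ) : Fin T :=
  ⟨(a % (T : ℤ)).toNat, by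
    have hT : 0 < (T : ℤ) := by
      exact_mod_cast Nat.pos_of_ne_zero (NeZero.ne T)
    have h1 : 0 ≤ a % (T : ℤ) := Int.emod_nonneg a (by omega)
    have h2 : a % (T : ℤ) < (T : ℤ) := Int.emod_lt_of_pos a hT
    omega⟩

-- `τ(k)`: the most recent observation time `≤ k` (i.e. the largest `j ≤ k` with
-- `f(s(j)) = 1`), or `τ₀` if no observation has occurred up to time `k` (`k < t₀`).
open Classical in
def tauZ {Ω : Type} {MM : ℕ} (s : ℕ → Ω → Fin MM) (f : Fin MM → Bool)
    (τ₀ : ℤ) (k : ℕ) (ω : Ω) : ℤ :=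
  if ∃ j ≤ k, f (s j ω) = true
  then ((Nat.findGreatest (fun j => f (s j ω) = true) k : ℕ) : ℤ)
  else τ₀

-- `σ(k) = r(τ(k))` if an observation occurred by time `k` (i.e. `k ≥ t₀`), else `σ₀`.
open Classical in
def sigmaProc {Ω : Type} {NN MM : ℕ} (r : ℕ → Ω → Fin NN) (s : ℕ → Ω → Fin MM)
    (f : Fin MM → Bool) (σ₀ : Fin NN) (k : ℕ) (ω : Ω) : Fin NN :=
  if ∃ j ≤ k, f (s j ω) = true
  then r (Nat.findGreatest (fun j => f (s j ω) = true) k) ω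
  else σ₀

/-- `ρ(k) = ⌊k - τ(k)⌋_T + 1 ∈ [T]`, represented 0-indexed as `⌊k - τ(k)⌋_T : Fin T`. -/
def rhoProc {Ω : Type} {MM T : ℕ} [NeZero T] (s : ℕ → Ω → Fin MM) (f : Fin MM → Bool)
    (τ₀ : ℤ) (k : ℕ) (ω : Ω) : Fin T :=
  intToFin T ((k : ℤ) - tauZ s f τ₀ k ω)

/-- The extended process `r̄(k) = (r(k), s(k), σ(k), ρ(k))`. -/
def rbarProc {Ω : Type} {NN MM T : ℕ} [NeZero T] (r : ℕ → Ω → Fin NN)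
    (s : ℕ → Ω → Fin MM) (f : Fin MM → Bool) (τ₀ : ℤ) (σ₀ : Fin NN)
    (k : ℕ) (ω : Ω) : XT NN MM T :=
  (r k ω, s k ω, sigmaProc r s f σ₀ k ω, rhoProc s f τ₀ k ω)

/-- Membership in `𝔛`: if `f(β) = 1` then `α = γ` and `δ = 1` (0-indexed: `δ = 0`). -/
def inX {NN MM T : ℕ} [NeZero T] (f : Fin MM → Bool) (χ : XT NN MM T) : Prop :=
  f χ.2.1 = true → χ.1 = χ.2.2.1 ∧ χ.2.2.2 = 0

/-- The transition probabilities `p̄_{χχ'}` of the extended chain. The condition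
`⌊δ' - δ - 1⌋_T = 0` for `δ, δ' ∈ [T]` is, in 0-indexed form, `δ' = δ + 1` in `Fin T`. -/
def pbar {NN MM T : ℕ} [NeZero T] (P : Matrix (Fin NN) (Fin NN) ℝ)
    (Q : Matrix (Fin MM) (Fin MM) ℝ) (f : Fin MM → Bool) (χ χ' : XT NN MM T) : ℝ :=
  (if f χ'.2.1 = true
    then (if χ'.1 = χ'.2.2.1 ∧ χ'.2.2.2 = 0 then (1 : ℝ) else 0)
    else (if χ'.2.2.1 = χ.2.2.1 ∧ χ'.2.2.2 = χ.2.2.2 + 1 then (1 : ℝ) else 0))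
  * P χ.1 χ'.1 * Q χ.2.1 χ'.2.1

/-- The state trajectory of the closed-loop system
`x(k+1) = A(mode(k)) x(k) + E(mode(k)) w(k)`, `x(0) = x₀`. -/
def traj {Ω S : Type} {n q : ℕ}
    (Amat : S → Matrix (Fin n) (Fin n) ℝ) (Emat : S → Matrix (Fin n) (Fin q) ℝ)
    (mode : ℕ → Ω → S) (w : ℕ → Ω → Fin q → ℝ) (x0 : Fin n → ℝ) : ℕ → Ω → Fin n → ℝ
  | 0, _ => x0
  | (k + 1), ω =>
      (Amat (mode k ω)).mulVec (traj Amat Emat mode w x0 k ω)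
        + (Emat (mode k ω)).mulVec (w k ω)

/-- `A_{K,χ} = A_α + B_α K_{γ,δ}`. -/
def AKmat {NN MM T n m : ℕ} (A : Fin NN → Matrix (Fin n) (Fin n) ℝ)
    (B : Fin NN → Matrix (Fin n) (Fin m) ℝ)
    (K : Fin NN → Fin T → Matrix (Fin m) (Fin n) ℝ) (χ : XT NN MM T) :
    Matrix (Fin n) (Fin n) ℝ :=
  A χ.1 + B χ.1 * K χ.2.2.1 χ.2.2.2

/-- `C_{K,χ} = C_α + D_α K_{γ,δ}`. -/
def CKmat {NN MM T n m ℓ : ℕ} (C : Fin NN → Matrix (Fin ℓ) (Fin n) ℝ)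
    (D : Fin NN → Matrix (Fin ℓ) (Fin m) ℝ)
    (K : Fin NN → Fin T → Matrix (Fin m) (Fin n) ℝ) (χ : XT NN MM T) :
    Matrix (Fin ℓ) (Fin n) ℝ :=
  C χ.1 + D χ.1 * K χ.2.2.1 χ.2.2.2

/-- Squared Euclidean norm of a vector, as an extended nonnegative real. -/
def sqE {d : ℕ} (v : Fin d → ℝ) : ENNReal := ENNReal.ofReal (∑ i, (v i) ^ 2)

-- The operator `D̄_χ(R) = ∑_{χ' ∈ 𝔛} p̄_{χ'χ} R_{χ'}`.
open Classical in
def Dop {NN MM T n : ℕ} [NeZero T] (P : Matrix (Fin NN) (Fin NN) ℝ)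
    (Q : Matrix (Fin MM) (Fin MM) ℝ) (f : Fin MM → Bool)
    (R : XT NN MM T → Matrix (Fin n) (Fin n) ℝ) (χ : XT NN MM T) :
    Matrix (Fin n) (Fin n) ℝ :=
  ∑ χ' : XT NN MM T, if inX f χ' then pbar P Q f χ' χ • R χ' else 0

-- The operator `F̄_χ(Z) = ∑_{χ' ∈ 𝔛} p̄_{χχ'} Z_{χ,χ'}`.
open Classical in
def Fop {NN MM T n : ℕ} [NeZero T] (P : Matrix (Fin NN) (Fin NN) ℝ)
    (Q : Matrix (Fin MM) (Fin MM) ℝ) (f : Fin MM → Bool)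
    (Z : XT NN MM T → XT NN MM T → Matrix (Fin n) (Fin n) ℝ) (χ : XT NN MM T) :
    Matrix (Fin n) (Fin n) ℝ :=
  ∑ χ' : XT NN MM T, if inX f χ' then pbar P Q f χ χ' • Z χ χ' else 0

/-- A pair `(γ,δ) ∈ [N] × [T]` is admissible if `(α,β,γ,δ) ∈ 𝔛` for some `α, β`. -/
def Admissible {NN MM T : ℕ} [NeZero T] (f : Fin MM → Bool) (g : Fin NN) (d : Fin T) : Prop :=
  ∃ (α : Fin NN) (β : Fin MM), inX (T := T) f (α, β, g, d)

/-- A realization, on some probability space, of the pair of independent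
time-homogeneous Markov chains `(r, s)` with transition matrices `P` and `Q`. -/
structure MJLSReal (NN MM : ℕ) (P : Matrix (Fin NN) (Fin NN) ℝ)
    (Q : Matrix (Fin MM) (Fin MM) ℝ) : Type 1 where
  Ω : Type
  inst : MeasurableSpace Ω
  μ : @Measure Ω inst
  prob : IsProbabilityMeasure μ
  r : ℕ → Ω → Fin NN
  s : ℕ → Ω → Fin MM
  meas_r : ∀ k, Measurable[inst] (r k)
  meas_s : ∀ k, Measurable[inst] (s k)
  markov_r : IsMarkovChain μ r fun i j => P i j
  markov_s : IsMarkovChain μ s fun i j => Q i j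
  indep : IndepFun (fun ω l => r l ω) (fun ω l => s l ω) μ

/-- A realization, on some probability space, of a time-homogeneous Markov chain `θ`
taking values in `𝔛` with transition probabilities `p̄`. -/
structure ThetaReal (NN MM T : ℕ) [NeZero T] (P : Matrix (Fin NN) (Fin NN) ℝ)
    (Q : Matrix (Fin MM) (Fin MM) ℝ) (f : Fin MM → Bool) : Type 1 where
  Ω : Type
  inst : MeasurableSpace Ω
  μ : @Measure Ω inst
  prob : IsProbabilityMeasure μ
  θ : ℕ → Ω → XT NN MM T
  meas : ∀ k, Measurable[inst] (θ k)
  mem : ∀ k ω, inX f (θ k ω)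
  markov : IsMarkovChain μ θ (pbar P Q f)

/-- Mean square stability of the closed-loop system `Σ_K`: there are `c > 0` and
`λ ∈ [0,1)` such that for every realization, every deterministic initialization
(`r(0) = r₀`, `s(0) = s₀` a.s., together with `σ₀` and `τ₀ ≤ 0`, so that `r̄(0)`
is a deterministic element of `𝔛`), every `x₀` and every `k`,
`E[‖x(k)‖²] ≤ c λ^k ‖x₀‖²` (with `w ≡ 0`). -/
def MeanSquareStable {NN MM T n m q : ℕ} [NeZero T]
    (P : Matrix (Fin NN) (Fin NN) ℝ) (Qm : Matrix (Fin MM) (Fin MM) ℝ) (f : Fin MM → Bool)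
    (A : Fin NN → Matrix (Fin n) (Fin n) ℝ) (B : Fin NN → Matrix (Fin n) (Fin m) ℝ)
    (E : Fin NN → Matrix (Fin n) (Fin q) ℝ)
    (K : Fin NN → Fin T → Matrix (Fin m) (Fin n) ℝ) : Prop :=
  ∃ c : ℝ, 0 < c ∧ ∃ lam : ℝ, 0 ≤ lam ∧ lam < 1 ∧
    ∀ (S : MJLSReal NN MM P Qm) (τ₀ : ℤ), τ₀ ≤ 0 →
      ∀ (σ₀ r₀ : Fin NN) (s₀ : Fin MM),
        (∀ᵐ ω ∂S.μ, S.r 0 ω = r₀ ∧ S.s 0 ω = s₀) →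
        ∀ (x0 : Fin n → ℝ) (k : ℕ),
          (∫⁻ ω, sqE (traj (AKmat A B K) (fun χ => E χ.1)
              (rbarProc S.r S.s f τ₀ σ₀) (fun _ _ => 0) x0 k ω) ∂S.μ)
            ≤ ENNReal.ofReal (c * lam ^ k * ∑ i, (x0 i) ^ 2)

/-- Mean square stability of `Σ̄_K` (the system driven by the chain `θ`). -/
def MeanSquareStableBar {NN MM T n m q : ℕ} [NeZero T]
    (P : Matrix (Fin NN) (Fin NN) ℝ) (Qm : Matrix (Fin MM) (Fin MM) ℝ) (f : Fin MM → Bool)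
    (A : Fin NN → Matrix (Fin n) (Fin n) ℝ) (B : Fin NN → Matrix (Fin n) (Fin m) ℝ)
    (E : Fin NN → Matrix (Fin n) (Fin q) ℝ)
    (K : Fin NN → Fin T → Matrix (Fin m) (Fin n) ℝ) : Prop :=
  ∃ c : ℝ, 0 < c ∧ ∃ lam : ℝ, 0 ≤ lam ∧ lam < 1 ∧
    ∀ (S : ThetaReal NN MM T P Qm f) (χ : XT NN MM T), inX f χ →
      (∀ᵐ ω ∂S.μ, S.θ 0 ω = χ) →
      ∀ (x0 : Fin n → ℝ) (k : ℕ),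
        (∫⁻ ω, sqE (traj (AKmat A B K) (fun χ' => E χ'.1) S.θ (fun _ _ => 0) x0 k ω) ∂S.μ)
          ≤ ENNReal.ofReal (c * lam ^ k * ∑ i, (x0 i) ^ 2)

/-- The impulse disturbance `w = e_i φ`, i.e. `w(0) = e_i` and `w(k) = 0` for `k ≥ 1`. -/
def impulse {Ω : Type} (q : ℕ) (i : Fin q) : ℕ → Ω → Fin q → ℝ :=
  fun k _ j => if k = 0 ∧ j = i then 1 else 0

/-- `∑_k E[‖z(k; 0, χ, e_i φ)‖²]` for `Σ_K` on a given realization with data `(τ₀, σ₀)`. -/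
def H2TermSigma {NN MM T n m q ℓ : ℕ} [NeZero T]
    {P : Matrix (Fin NN) (Fin NN) ℝ} {Qm : Matrix (Fin MM) (Fin MM) ℝ}
    (S : MJLSReal NN MM P Qm) (f : Fin MM → Bool) (τ₀ : ℤ) (σ₀ : Fin NN)
    (A : Fin NN → Matrix (Fin n) (Fin n) ℝ) (B : Fin NN → Matrix (Fin n) (Fin m) ℝ)
    (C : Fin NN → Matrix (Fin ℓ) (Fin n) ℝ) (D : Fin NN → Matrix (Fin ℓ) (Fin m) ℝ)
    (E : Fin NN → Matrix (Fin n) (Fin q) ℝ)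
    (K : Fin NN → Fin T → Matrix (Fin m) (Fin n) ℝ) (i : Fin q) : ENNReal :=
  ∑' k : ℕ, ∫⁻ ω, sqE ((CKmat C D K (rbarProc S.r S.s f τ₀ σ₀ k ω)).mulVec
      (traj (AKmat A B K) (fun χ => E χ.1) (rbarProc S.r S.s f τ₀ σ₀)
        (impulse q i) 0 k ω)) ∂S.μ

-- `‖Σ_K‖₂² < γ`, where `‖Σ_K‖₂² = ∑_{i=1}^q ∑_{χ ∈ 𝔛} μ̄(χ) ‖z(⬝;0,χ,e_iφ)‖₂²` and the
-- expectations are over arbitrary realizations with deterministic initialization `r̄(0) = χ`.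
open Classical in
def H2SqLtSigma {NN MM T n m q ℓ : ℕ} [NeZero T]
    (P : Matrix (Fin NN) (Fin NN) ℝ) (Qm : Matrix (Fin MM) (Fin MM) ℝ) (f : Fin MM → Bool)
    (A : Fin NN → Matrix (Fin n) (Fin n) ℝ) (B : Fin NN → Matrix (Fin n) (Fin m) ℝ)
    (C : Fin NN → Matrix (Fin ℓ) (Fin n) ℝ) (D : Fin NN → Matrix (Fin ℓ) (Fin m) ℝ)
    (E : Fin NN → Matrix (Fin n) (Fin q) ℝ)
    (K : Fin NN → Fin T → Matrix (Fin m) (Fin n) ℝ)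
    (μbar : XT NN MM T → ℝ) (γ : ℝ) : Prop :=
  ∀ (S : Fin q → XT NN MM T → MJLSReal NN MM P Qm)
    (τ : Fin q → XT NN MM T → ℤ) (σv : Fin q → XT NN MM T → Fin NN),
    (∀ i χ, inX f χ → τ i χ ≤ 0 ∧
        (∀ᵐ ω ∂(S i χ).μ, rbarProc (S i χ).r (S i χ).s f (τ i χ) (σv i χ) 0 ω = χ)) →
    (∑ i : Fin q, ∑ χ : XT NN MM T,
        if inX f χ
        then ENNReal.ofReal (μbar χ) * H2TermSigma (S i χ) f (τ i χ) (σv i χ) A B C D E K i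
        else 0)
      < ENNReal.ofReal γ

/-- `∑_k E[‖z̄(k; 0, χ, e_i φ)‖²]` for `Σ̄_K` on a given realization of `θ`. -/
def H2TermBar {NN MM T n m q ℓ : ℕ} [NeZero T]
    {P : Matrix (Fin NN) (Fin NN) ℝ} {Qm : Matrix (Fin MM) (Fin MM) ℝ} {f : Fin MM → Bool}
    (S : ThetaReal NN MM T P Qm f)
    (A : Fin NN → Matrix (Fin n) (Fin n) ℝ) (B : Fin NN → Matrix (Fin n) (Fin m) ℝ)
    (C : Fin NN → Matrix (Fin ℓ) (Fin n) ℝ) (D : Fin NN → Matrix (Fin ℓ) (Fin m) ℝ)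
    (E : Fin NN → Matrix (Fin n) (Fin q) ℝ)
    (K : Fin NN → Fin T → Matrix (Fin m) (Fin n) ℝ) (i : Fin q) : ENNReal :=
  ∑' k : ℕ, ∫⁻ ω, sqE ((CKmat C D K (S.θ k ω)).mulVec
      (traj (AKmat A B K) (fun χ => E χ.1) S.θ (impulse q i) 0 k ω)) ∂S.μ

-- `‖Σ̄_K‖₂² < γ` (the `H₂` norm of `Σ̄_K`, defined with `θ` in place of `r̄`).
open Classical in
def H2SqLtBar {NN MM T n m q ℓ : ℕ} [NeZero T]
    (P : Matrix (Fin NN) (Fin NN) ℝ) (Qm : Matrix (Fin MM) (Fin MM) ℝ) (f : Fin MM → Bool)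
    (A : Fin NN → Matrix (Fin n) (Fin n) ℝ) (B : Fin NN → Matrix (Fin n) (Fin m) ℝ)
    (C : Fin NN → Matrix (Fin ℓ) (Fin n) ℝ) (D : Fin NN → Matrix (Fin ℓ) (Fin m) ℝ)
    (E : Fin NN → Matrix (Fin n) (Fin q) ℝ)
    (K : Fin NN → Fin T → Matrix (Fin m) (Fin n) ℝ)
    (μbar : XT NN MM T → ℝ) (γ : ℝ) : Prop :=
  ∀ (S : Fin q → XT NN MM T → ThetaReal NN MM T P Qm f),
    (∀ i χ, inX f χ → (∀ᵐ ω ∂(S i χ).μ, (S i χ).θ 0 ω = χ)) →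
    (∑ i : Fin q, ∑ χ : XT NN MM T,
        if inX f χ
        then ENNReal.ofReal (μbar χ) * H2TermBar (S i χ) A B C D E K i
        else 0)
      < ENNReal.ofReal γ

/-- The σ-algebra `Θ_k` generated by `r(0), s(0), …, r(k), s(k)`, for a realization. -/
def sigFiltSigma {NN MM : ℕ} {P : Matrix (Fin NN) (Fin NN) ℝ}
    {Q : Matrix (Fin MM) (Fin MM) ℝ} (S : MJLSReal NN MM P Q) (k : ℕ) :
    MeasurableSpace S.Ω :=
  ⨆ j ∈ Finset.range (k + 1),
    (MeasurableSpace.comap (S.r j) inferInstance ⊔ MeasurableSpace.comap (S.s j) inferInstance)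

/-- The σ-algebra generated by `θ(0), …, θ(k)`, for a realization of `θ`. -/
def sigFiltBar {NN MM T : ℕ} [NeZero T] {P : Matrix (Fin NN) (Fin NN) ℝ}
    {Q : Matrix (Fin MM) (Fin MM) ℝ} {f : Fin MM → Bool} (S : ThetaReal NN MM T P Q f)
    (k : ℕ) : MeasurableSpace S.Ω :=
  ⨆ j ∈ Finset.range (k + 1), MeasurableSpace.comap (S.θ j) inferInstance

/-- `Σ_K` satisfies `‖Σ_K‖∞² < γ`: there is `0 ≤ c < γ` such that `‖z‖₂² ≤ c ‖w‖₂²`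
for every realization, every deterministic initialization `r̄(0) = r̄₀ ∈ 𝔛`, and
every nonzero `w ∈ ℓ²(ℝ^q)` adapted to `(Θ_k)_k` (with `x₀ = 0`). -/
def HinfSqLtSigma {NN MM T n m q ℓ : ℕ} [NeZero T]
    (P : Matrix (Fin NN) (Fin NN) ℝ) (Qm : Matrix (Fin MM) (Fin MM) ℝ) (f : Fin MM → Bool)
    (A : Fin NN → Matrix (Fin n) (Fin n) ℝ) (B : Fin NN → Matrix (Fin n) (Fin m) ℝ)
    (C : Fin NN → Matrix (Fin ℓ) (Fin n) ℝ) (D : Fin NN → Matrix (Fin ℓ) (Fin m) ℝ)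
    (E : Fin NN → Matrix (Fin n) (Fin q) ℝ)
    (K : Fin NN → Fin T → Matrix (Fin m) (Fin n) ℝ) (γ : ℝ) : Prop :=
  ∃ c : ℝ, 0 ≤ c ∧ c < γ ∧
    ∀ (S : MJLSReal NN MM P Qm) (τ₀ : ℤ), τ₀ ≤ 0 → ∀ (σ₀ : Fin NN) (χ : XT NN MM T),
      inX f χ → (∀ᵐ ω ∂S.μ, rbarProc S.r S.s f τ₀ σ₀ 0 ω = χ) →
      ∀ (w : ℕ → S.Ω → Fin q → ℝ),
        (∀ k, Measurable[sigFiltSigma S k] (w k)) →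
        0 < (∑' k : ℕ, ∫⁻ ω, sqE (w k ω) ∂S.μ) →
        (∑' k : ℕ, ∫⁻ ω, sqE (w k ω) ∂S.μ) ≠ ⊤ →
        (∑' k : ℕ, ∫⁻ ω, sqE ((CKmat C D K (rbarProc S.r S.s f τ₀ σ₀ k ω)).mulVec
            (traj (AKmat A B K) (fun χ' => E χ'.1) (rbarProc S.r S.s f τ₀ σ₀) w 0 k ω)) ∂S.μ)
          ≤ ENNReal.ofReal c * (∑' k : ℕ, ∫⁻ ω, sqE (w k ω) ∂S.μ)

/-- `Σ̄_K` satisfies `‖Σ̄_K‖∞² < γ` (disturbances adapted to the filtration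
generated by `θ`). -/
def HinfSqLtBar {NN MM T n m q ℓ : ℕ} [NeZero T]
    (P : Matrix (Fin NN) (Fin NN) ℝ) (Qm : Matrix (Fin MM) (Fin MM) ℝ) (f : Fin MM → Bool)
    (A : Fin NN → Matrix (Fin n) (Fin n) ℝ) (B : Fin NN → Matrix (Fin n) (Fin m) ℝ)
    (C : Fin NN → Matrix (Fin ℓ) (Fin n) ℝ) (D : Fin NN → Matrix (Fin ℓ) (Fin m) ℝ)
    (E : Fin NN → Matrix (Fin n) (Fin q) ℝ)
    (K : Fin NN → Fin T → Matrix (Fin m) (Fin n) ℝ) (γ : ℝ) : Prop :=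
  ∃ c : ℝ, 0 ≤ c ∧ c < γ ∧
    ∀ (S : ThetaReal NN MM T P Qm f) (χ : XT NN MM T),
      inX f χ → (∀ᵐ ω ∂S.μ, S.θ 0 ω = χ) →
      ∀ (w : ℕ → S.Ω → Fin q → ℝ),
        (∀ k, Measurable[sigFiltBar S k] (w k)) →
        0 < (∑' k : ℕ, ∫⁻ ω, sqE (w k ω) ∂S.μ) →
        (∑' k : ℕ, ∫⁻ ω, sqE (w k ω) ∂S.μ) ≠ ⊤ →
        (∑' k : ℕ, ∫⁻ ω, sqE ((CKmat C D K (S.θ k ω)).mulVec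
            (traj (AKmat A B K) (fun χ' => E χ'.1) S.θ w 0 k ω)) ∂S.μ)
          ≤ ENNReal.ofReal c * (∑' k : ℕ, ∫⁻ ω, sqE (w k ω) ∂S.μ)

/-- The symmetric 4×4 block matrix appearing in the `H∞` LMI, with diagonal blocks
`D1, γ I_q, D3, I_ℓ`, sub-diagonal blocks `(3,1) = B31`, `(3,2) = B32`, `(4,1) = B41`,
the corresponding transposed blocks above the diagonal, and zeros elsewhere. -/
def hinfBlock {n q ℓ : ℕ} (γ : ℝ) (D1 D3 : Matrix (Fin n) (Fin n) ℝ)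
    (B31 : Matrix (Fin n) (Fin n) ℝ) (B32 : Matrix (Fin n) (Fin q) ℝ)
    (B41 : Matrix (Fin ℓ) (Fin n) ℝ) :
    Matrix ((Fin n ⊕ Fin q) ⊕ (Fin n ⊕ Fin ℓ)) ((Fin n ⊕ Fin q) ⊕ (Fin n ⊕ Fin ℓ)) ℝ :=
  Matrix.fromBlocks
    (Matrix.fromBlocks D1 0 0 (γ • (1 : Matrix (Fin q) (Fin q) ℝ)))
    (Matrix.fromBlocks B31ᵀ B41ᵀ B32ᵀ 0)
    (Matrix.fromBlocks B31 B32 B41 0)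
    (Matrix.fromBlocks D3 0 0 (1 : Matrix (Fin ℓ) (Fin ℓ) ℝ))

/-!
The extended process `r̄` of any realization of `(r, s)` is a Markov chain with transition
probabilities `p̄`: the memory `(σ, ρ)` is a deterministic function of its own past and of the next
value of `(r, s)`, and `p̄` is the resulting random mapping. Conversely, the components `(α, β)` of
a realization of `θ` started at a point of `𝔛` are independent Markov chains with matrices `P` and
`Q`, and the extended process they drive agrees with `θ` almost surely. Both systems therefore have
the same trajectories, driven by the same disturbances up to null sets, which gives (i) ⇔ (ii).

For (iii) ⇒ (ii), a congruence and a Schur complement turn the matrix inequalities into a strict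
dissipation inequality for the storage function `V(χ, x) = xᵀ X_χ⁻¹ x`. By compactness of the unit
sphere the strictness is uniform, and summing the inequality along trajectories gives exponential
decay of `E[V]` for `w = 0` and an `ℓ²` gain below `γ` for `x₀ = 0`.
-/

/-! ### Histories of a process -/

section History

variable {Ω S S' β : Type*} {X : ℕ → Ω → S} {k : ℕ}

/-- The trajectory of the process `X` up to time `k`, as a single random variable. A random
variable is nonanticipative at time `k` if it factors through `history X k`. -/
def history (X : ℕ → Ω → S) (k : ℕ) (ω : Ω) : Fin (k + 1) → S := fun l => X l ω

theorem history_eq_history_iff {Y : ℕ → Ω → S} {ω ω' : Ω} :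
    history X k ω = history Y k ω' ↔ ∀ l ≤ k, X l ω = Y l ω' := by
  simp only [funext_iff, history, Fin.forall_iff, Nat.lt_succ_iff]

theorem history_succ_preimage (X : ℕ → Ω → S) (k : ℕ) (h : Fin (k + 2) → S) :
    history X (k + 1) ⁻¹' {h}
      = X (k + 1) ⁻¹' {h (Fin.last (k + 1))} ∩ history X k ⁻¹' {Fin.init h} := by
  ext ω
  simp only [Set.mem_preimage, Set.mem_singleton_iff, Set.mem_inter_iff, funext_iff,
    Fin.forall_fin_succ' (n := k + 1)]
  exact and_comm

theorem history_prodMk_preimage (X : ℕ → Ω → S) (Y : ℕ → Ω → S') (k : ℕ)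
    (h : Fin (k + 1) → S) (h' : Fin (k + 1) → S') :
    history (fun k ω => (X k ω, Y k ω)) k ⁻¹' {fun l => (h l, h' l)}
      = history X k ⁻¹' {h} ∩ history Y k ⁻¹' {h'} := by
  ext ω
  simp only [Set.mem_inter_iff, Set.mem_preimage, Set.mem_singleton_iff, Prod.ext_iff,
    funext_iff, history, forall_and]

theorem factorsThrough_history_apply {l : ℕ} (hl : l ≤ k) :
    (X l).FactorsThrough (history X k) :=
  fun _ _ h => history_eq_history_iff.1 h l hl

theorem factorsThrough_history_history {l : ℕ} (hl : l ≤ k) :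
    (history X l).FactorsThrough (history X k) := fun _ _ h =>
  history_eq_history_iff.2 fun i hi => history_eq_history_iff.1 h i (hi.trans hl)

variable [MeasurableSpace S]

theorem measurable_history [MeasurableSpace Ω] (hX : ∀ k, Measurable (X k)) (k : ℕ) :
    Measurable (history X k) :=
  measurable_pi_iff.2 fun l => hX l

theorem measurableSet_forall_le_eq [MeasurableSpace Ω] [MeasurableSingletonClass S]
    (hX : ∀ k, Measurable (X k)) (k : ℕ) (i : ℕ → S) :
    MeasurableSet {ω | ∀ l ≤ k, X l ω = i l} := by
  simp only [Set.ofPred_forall]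
  exact .iInter fun l => .iInter fun _ => hX l (measurableSet_singleton (i l))

theorem comap_history (X : ℕ → Ω → S) (k : ℕ) :
    MeasurableSpace.comap (history X k) MeasurableSpace.pi
      = ⨆ j ∈ Finset.range (k + 1), MeasurableSpace.comap (X j) inferInstance := by
  simp only [MeasurableSpace.pi, MeasurableSpace.comap_iSup, MeasurableSpace.comap_comp,
    Finset.mem_range]
  rw [iSup_subtype', ← Fin.equivSubtype.iSup_comp]
  rfl

theorem measurable_comap_iff_factorsThrough [Countable S] [MeasurableSingletonClass S]
    [MeasurableSpace β] [MeasurableSingletonClass β] {Y : Ω → S} {y : Ω → β} :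
    Measurable[MeasurableSpace.comap Y inferInstance] y ↔ y.FactorsThrough Y := by
  refine ⟨fun h => h.factorsThrough, fun h => ?_⟩
  intro B _
  refine ⟨Y '' (y ⁻¹' B), (Set.to_countable _).measurableSet, ?_⟩
  ext ω
  constructor
  · rintro ⟨ω', hω', hY⟩
    rwa [Set.mem_preimage, ← h hY]
  · exact fun hω => ⟨ω, hω, rfl⟩

theorem measurable_of_factorsThrough_history [MeasurableSpace Ω] [Countable S]
    [MeasurableSingletonClass S] [MeasurableSpace β] [MeasurableSingletonClass β]
    (hX : ∀ k, Measurable (X k)) {y : Ω → β} (hy : y.FactorsThrough (history X k)) :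
    Measurable y :=
  (measurable_comap_iff_factorsThrough.2 hy).mono (measurable_history hX k).comap_le le_rfl

theorem lintegral_comp_fintype [MeasurableSpace Ω] {μ : Measure Ω} [Fintype S]
    [MeasurableSingletonClass S] {Y : Ω → S} (hY : Measurable Y) (g : S → ENNReal) :
    ∫⁻ ω, g (Y ω) ∂μ = ∑ a, g a * μ (Y ⁻¹' {a}) := by
  rw [← lintegral_map (measurable_of_finite g) hY, lintegral_fintype]
  simp only [Measure.map_apply hY (measurableSet_singleton _)]

end History

/-! ### Finite Markov chains -/

namespace IsMarkovChain

section Basic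

variable {Ω S S' : Type} {mΩ : MeasurableSpace Ω} {μ : Measure Ω}
  {X : ℕ → Ω → S} {P : S → S → ℝ}

theorem measureReal_inter_history (h : IsMarkovChain μ X P) (k : ℕ) (j : S)
    (i : Fin (k + 1) → S) :
    μ.real (X (k + 1) ⁻¹' {j} ∩ history X k ⁻¹' {i})
      = P (i (Fin.last k)) j * μ.real (history X k ⁻¹' {i}) := by
  have fibre : history X k ⁻¹' {i} = {ω | ∀ l ≤ k, X l ω = i (Fin.ofNat (k + 1) l)} := by
    ext ω
    simp only [Set.mem_preimage, Set.mem_singleton_iff, funext_iff, history, Fin.forall_iff,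
      Nat.lt_succ_iff, Set.mem_ofPred_eq]
    refine forall₂_congr fun l hl => ?_
    rw [show Fin.ofNat (k + 1) l = ⟨l, Nat.lt_succ_of_le hl⟩ from
      Fin.ext (Nat.mod_eq_of_lt (Nat.lt_succ_of_le hl))]
  have last : Fin.ofNat (k + 1) k = Fin.last k := Fin.ext (Nat.mod_eq_of_lt k.lt_succ_self)
  have := h k j fun l => i (Fin.ofNat (k + 1) l)
  rw [last] at this
  rw [fibre]
  exact this

theorem of_comp_injective {ι : S' → S} (hι : ι.Injective) {Y : ℕ → Ω → S'}
    (h : IsMarkovChain μ (fun k ω => ι (Y k ω)) P) :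
    IsMarkovChain μ Y fun i j => P (ι i) (ι j) := fun k j i => by
  simpa only [hι.eq_iff] using h k (ι j) fun l => ι (i l)

variable [MeasurableSpace S] [MeasurableSingletonClass S]

theorem lintegral_succ [Fintype S] [IsFiniteMeasure μ] (hX : ∀ k, Measurable (X k))
    (hP : ∀ i j, 0 ≤ P i j) (h : IsMarkovChain μ X P) {k : ℕ} {F : Ω → S → ENNReal}
    (hF : F.FactorsThrough (history X k)) :
    ∫⁻ ω, F ω (X (k + 1) ω) ∂μ = ∫⁻ ω, ∑ j, ENNReal.ofReal (P (X k ω) j) * F ω j ∂μ := by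
  obtain ⟨G, rfl⟩ := Function.factorsThrough_iff _ |>.1 hF
  have step (j : S) (i : Fin (k + 1) → S) :
      μ (X (k + 1) ⁻¹' {j} ∩ history X k ⁻¹' {i})
        = ENNReal.ofReal (P (i (Fin.last k)) j) * μ (history X k ⁻¹' {i}) := by
    rw [← ENNReal.ofReal_toReal (measure_ne_top μ (_ ∩ _)),
      ← ENNReal.ofReal_toReal (measure_ne_top μ (history X k ⁻¹' {i})),
      ← ENNReal.ofReal_mul (hP _ _)]
    exact congrArg ENNReal.ofReal (h.measureReal_inter_history k j i)
  calc ∫⁻ ω, G (history X k ω) (X (k + 1) ω) ∂μ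
      = ∑ a : (Fin (k + 1) → S) × S,
          G a.1 a.2 * μ ((fun ω => (history X k ω, X (k + 1) ω)) ⁻¹' {a}) :=
        lintegral_comp_fintype ((measurable_history hX k).prodMk (hX (k + 1)))
          fun a => G a.1 a.2
    _ = ∑ i, (∑ j, ENNReal.ofReal (P (i (Fin.last k)) j) * G i j)
          * μ (history X k ⁻¹' {i}) := by
        rw [Fintype.sum_prod_type]
        refine Finset.sum_congr rfl fun i _ => ?_
        rw [Finset.sum_mul]
        refine Finset.sum_congr rfl fun j _ => ?_
        rw [← Set.singleton_prod_singleton, Set.mk_preimage_prod, Set.inter_comm, step]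
        ring
    _ = ∫⁻ ω, ∑ j, ENNReal.ofReal (P (X k ω) j) * G (history X k ω) j ∂μ :=
        (lintegral_comp_fintype (measurable_history hX k) fun i =>
          ∑ j, ENNReal.ofReal (P (i (Fin.last k)) j) * G i j).symm

theorem of_lintegral_succ [Fintype S] (hX : ∀ k, Measurable (X k))
    (hP : ∀ i j, 0 ≤ P i j)
    (h : ∀ (k : ℕ) (F : Ω → S → ENNReal), F.FactorsThrough (history X k) →
      ∫⁻ ω, F ω (X (k + 1) ω) ∂μ = ∫⁻ ω, ∑ j, ENNReal.ofReal (P (X k ω) j) * F ω j ∂μ) :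
    IsMarkovChain μ X P := by
  classical
  intro k j i
  set past : Set Ω := {ω | ∀ l ≤ k, X l ω = i l} with past_def
  have measurableSet_past : MeasurableSet past := measurableSet_forall_le_eq hX k i
  have key := h k (fun ω j' => if j' = j ∧ ω ∈ past then 1 else 0) fun ω ω' hω => by
    have := history_eq_history_iff.1 hω
    simp +contextual only [past_def, Set.mem_ofPred_eq, this]
  have left : ∫⁻ ω, (if X (k + 1) ω = j ∧ ω ∈ past then 1 else 0) ∂μ
      = μ (X (k + 1) ⁻¹' {j} ∩ past) := by
    rw [← lintegral_indicator_one
      ((hX (k + 1) (measurableSet_singleton j)).inter measurableSet_past)]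
    exact lintegral_congr fun ω => by simp [Set.indicator_apply]
  have right : ∫⁻ ω, ∑ j', ENNReal.ofReal (P (X k ω) j')
      * (if j' = j ∧ ω ∈ past then 1 else 0) ∂μ = ENNReal.ofReal (P (i k) j) * μ past := by
    rw [← lintegral_indicator_const measurableSet_past]
    refine lintegral_congr fun ω => ?_
    by_cases hω : ω ∈ past
    · have current : X k ω = i k := hω k le_rfl
      simp [hω, current]
    · simp [hω]
  rw [left, right] at key
  refine (congrArg ENNReal.toReal key).trans ?_
  rw [ENNReal.toReal_mul, ENNReal.toReal_ofReal (hP _ _)]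

theorem ae_ne_zero [Finite S] [IsFiniteMeasure μ] (hX : ∀ k, Measurable (X k))
    (hP : ∀ i j, 0 ≤ P i j) (h : IsMarkovChain μ X P) (k : ℕ) :
    ∀ᵐ ω ∂μ, P (X k ω) (X (k + 1) ω) ≠ 0 := by
  classical
  cases nonempty_fintype S
  have zero : ∫⁻ ω, (if P (X k ω) (X (k + 1) ω) = 0 then 1 else 0 : ENNReal) ∂μ = 0 := by
    rw [h.lintegral_succ (F := fun ω j => if P (X k ω) j = 0 then 1 else 0) hX hP
      fun ω ω' hω => by simp only [factorsThrough_history_apply le_rfl hω]]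
    simp +contextual
  have ae_zero := (lintegral_eq_zero_iff ((measurable_of_finite fun a : S × S =>
    (if P a.1 a.2 = 0 then 1 else 0 : ENNReal)).comp ((hX k).prodMk (hX (k + 1))))).1 zero
  filter_upwards [ae_zero] with ω hω h0
  simp [h0] at hω

end Basic

end IsMarkovChain

section Independence

variable {Ω α β S S' : Type*} {mΩ : MeasurableSpace Ω} {μ : Measure Ω}
  [MeasurableSpace α] [MeasurableSingletonClass α] [Countable α]
  [MeasurableSpace β] [MeasurableSingletonClass β] [Countable β]
  [MeasurableSpace S] [MeasurableSpace S'] {X : ℕ → Ω → S} {Y : ℕ → Ω → S'}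

theorem indepFun_iff_measure_inter_preimage_singleton [IsFiniteMeasure μ] {U : Ω → α}
    {V : Ω → β} (hU : Measurable U) (hV : Measurable V) :
    IndepFun U V μ
      ↔ ∀ a b, μ (U ⁻¹' {a} ∩ V ⁻¹' {b}) = μ (U ⁻¹' {a}) * μ (V ⁻¹' {b}) := by
  refine ⟨fun h a b => h.measure_inter_preimage_eq_mul _ _ (measurableSet_singleton a)
    (measurableSet_singleton b), fun h => ?_⟩
  rw [indepFun_iff_map_prod_eq_prod_map_map hU.aemeasurable hV.aemeasurable]
  refine Measure.ext_of_singleton fun ⟨a, b⟩ => ?_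
  have ha := measurableSet_singleton a
  have hb := measurableSet_singleton b
  rw [← Set.singleton_prod_singleton, Measure.prod_prod, Measure.map_apply hU ha,
    Measure.map_apply hV hb, Measure.map_apply (hU.prodMk hV) (ha.prod hb),
    Set.mk_preimage_prod, h]

theorem indepFun_process_of_history [IsProbabilityMeasure μ]
    (hX : ∀ k, Measurable (X k)) (hY : ∀ k, Measurable (Y k))
    (h : ∀ k, IndepFun (history X k) (history Y k) μ) :
    IndepFun (fun ω k => X k ω) (fun ω k => Y k ω) μ := by
  refine IndepFun.process_indepFun_process hX hY fun I J => ?_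
  have bound (l) (hl : l ∈ I ∪ J) : l < (I ∪ J).sup id + 1 :=
    Nat.lt_succ_of_le (Finset.le_sup (f := id) hl)
  exact (h ((I ∪ J).sup id)).comp
    (φ := fun a (l : I) => a ⟨l, bound l (Finset.mem_union_left J l.2)⟩)
    (ψ := fun b (l : J) => b ⟨l, bound l (Finset.mem_union_right I l.2)⟩)
    (by fun_prop) (by fun_prop)

end Independence

namespace IsMarkovChain

section Product

variable {Ω S S' : Type} {mΩ : MeasurableSpace Ω} {μ : Measure Ω}
  {X : ℕ → Ω → S} {P : S → S → ℝ} {Y : ℕ → Ω → S'} {Q : S' → S' → ℝ}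
  [MeasurableSpace S] [MeasurableSingletonClass S]
  [MeasurableSpace S'] [MeasurableSingletonClass S']

theorem prodMk (hX : IsMarkovChain μ X P) (hY : IsMarkovChain μ Y Q)
    (hXY : IndepFun (fun ω k => X k ω) (fun ω k => Y k ω) μ) :
    IsMarkovChain μ (fun k ω => (X k ω, Y k ω)) fun a b => P a.1 b.1 * Q a.2 b.2 := by
  intro k j i
  have measurable_past {S₀ : Type} [MeasurableSpace S₀] [MeasurableSingletonClass S₀]
      (i : ℕ → S₀) : MeasurableSet {x : ℕ → S₀ | ∀ l ≤ k, x l = i l} :=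
    measurableSet_forall_le_eq (fun l => measurable_pi_apply l) k i
  have past := hXY.measure_inter_preimage_eq_mul _ _ (measurable_past fun l => (i l).1)
    (measurable_past fun l => (i l).2)
  have next := hXY.measure_inter_preimage_eq_mul _ _
    ((measurable_pi_apply (k + 1) (measurableSet_singleton j.1)).inter
      (measurable_past fun l => (i l).1))
    ((measurable_pi_apply (k + 1) (measurableSet_singleton j.2)).inter
      (measurable_past fun l => (i l).2))
  have split_past : {ω | ∀ l ≤ k, (X l ω, Y l ω) = i l}
      = {ω | ∀ l ≤ k, X l ω = (i l).1} ∩ {ω | ∀ l ≤ k, Y l ω = (i l).2} := by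
    ext ω
    simp only [Prod.ext_iff, Set.mem_ofPred_eq, Set.mem_inter_iff, forall_and]
  have split_next : {ω | (X (k + 1) ω, Y (k + 1) ω) = j ∧ ∀ l ≤ k, (X l ω, Y l ω) = i l}
      = {ω | X (k + 1) ω = j.1 ∧ ∀ l ≤ k, X l ω = (i l).1}
        ∩ {ω | Y (k + 1) ω = j.2 ∧ ∀ l ≤ k, Y l ω = (i l).2} := by
    ext ω
    simp only [Prod.ext_iff, Set.mem_ofPred_eq, Set.mem_inter_iff, forall_and]
    tauto
  rw [split_next, split_past]
  refine (congrArg ENNReal.toReal next).trans ?_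
  refine .trans ?_ (congrArg (P (i k).1 j.1 * Q (i k).2 j.2 * ·.toReal) past.symm)
  rw [ENNReal.toReal_mul, ENNReal.toReal_mul]
  refine (congrArg₂ (· * ·) (hX k j.1 fun l => (i l).1) (hY k j.2 fun l => (i l).2)).trans ?_
  exact mul_mul_mul_comm _ _ _ _

theorem indepFun_of_prodMk [IsProbabilityMeasure μ] [Countable S] [Countable S']
    (hmX : ∀ k, Measurable (X k)) (hmY : ∀ k, Measurable (Y k))
    (hX : IsMarkovChain μ X P) (hY : IsMarkovChain μ Y Q)
    (hXY : IsMarkovChain μ (fun k ω => (X k ω, Y k ω)) fun a b => P a.1 b.1 * Q a.2 b.2)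
    (h0 : IndepFun (X 0) (Y 0) μ) :
    IndepFun (fun ω k => X k ω) (fun ω k => Y k ω) μ := by
  refine indepFun_process_of_history hmX hmY fun k => ?_
  rw [indepFun_iff_measure_inter_preimage_singleton (measurable_history hmX k)
    (measurable_history hmY k)]
  suffices h : ∀ i i', μ.real (history X k ⁻¹' {i} ∩ history Y k ⁻¹' {i'})
      = μ.real (history X k ⁻¹' {i}) * μ.real (history Y k ⁻¹' {i'}) by
    intro i i'
    have := h i i'
    rwa [measureReal_def, measureReal_def, measureReal_def, ← ENNReal.toReal_mul,
      ENNReal.toReal_eq_toReal_iff' (measure_ne_top _ _)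
        (ENNReal.mul_ne_top (measure_ne_top _ _) (measure_ne_top _ _))] at this
  induction k with
  | zero =>
    intro i i'
    have fibre {S₀ : Type} (U : ℕ → Ω → S₀) (i : Fin 1 → S₀) :
        history U 0 ⁻¹' {i} = U 0 ⁻¹' {i 0} := by
      ext ω
      simp [funext_iff, history]
    rw [fibre, fibre, measureReal_def, h0.measure_inter_preimage_eq_mul _ _
      (measurableSet_singleton _) (measurableSet_singleton _), ENNReal.toReal_mul]
    rfl
  | succ k ih =>
    intro i i'
    rw [← history_prodMk_preimage, history_succ_preimage, history_succ_preimage X,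
      history_succ_preimage Y, hX.measureReal_inter_history, hY.measureReal_inter_history]
    refine (hXY.measureReal_inter_history k _ fun l => (Fin.init i l, Fin.init i' l)).trans ?_
    rw [history_prodMk_preimage, ih]
    exact mul_mul_mul_comm _ _ _ _

end Product

section Map

variable {Ω S S' : Type} {mΩ : MeasurableSpace Ω} {μ : Measure Ω} [IsFiniteMeasure μ]
  {X : ℕ → Ω → S} {P : S → S → ℝ} {R : S' → S' → ℝ}
  [MeasurableSpace S] [MeasurableSingletonClass S]
  [MeasurableSpace S'] [MeasurableSingletonClass S']

theorem map [Fintype S] [Finite S'] [DecidableEq S'] (hX : ∀ k, Measurable (X k))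
    (hP : ∀ i j, 0 ≤ P i j) (hR : ∀ a b, 0 ≤ R a b) (h : IsMarkovChain μ X P) (φ : S → S')
    (hφ : ∀ i b, ∑ j with φ j = b, P i j = R (φ i) b) :
    IsMarkovChain μ (fun k ω => φ (X k ω)) R := by
  cases nonempty_fintype S'
  refine of_lintegral_succ (fun k => (measurable_of_finite φ).comp (hX k)) hR fun k F hF => ?_
  have hF' : (fun ω j => F ω (φ j)).FactorsThrough (history X k) := fun ω ω' hω => by
    have := hF (history_eq_history_iff.2 fun l hl =>
      congrArg φ (history_eq_history_iff.1 hω l hl))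
    simp only [this]
  rw [h.lintegral_succ (F := fun ω j => F ω (φ j)) hX hP hF']
  refine lintegral_congr fun ω => ?_
  rw [← Finset.sum_fiberwise Finset.univ φ]
  refine Finset.sum_congr rfl fun b _ => ?_
  rw [← hφ, ENNReal.ofReal_sum_of_nonneg fun j _ => hP _ j, Finset.sum_mul]
  refine Finset.sum_congr rfl fun j hj => ?_
  rw [(Finset.mem_filter.1 hj).2]

theorem fst [Finite S] [Fintype S'] {P : S → S → ℝ} {Q : S' → S' → ℝ} {X : ℕ → Ω → S × S'}
    (hX : ∀ k, Measurable (X k)) (hP : ∀ i j, 0 ≤ P i j) (hQ : ∀ i j, 0 ≤ Q i j)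
    (hQ_sum : ∀ i, ∑ j, Q i j = 1)
    (h : IsMarkovChain μ X fun a b => P a.1 b.1 * Q a.2 b.2) :
    IsMarkovChain μ (fun k ω => (X k ω).1) P := by
  classical
  cases nonempty_fintype S
  refine h.map hX (fun a b => mul_nonneg (hP _ _) (hQ _ _)) hP Prod.fst fun i b => ?_
  rw [Finset.sum_filter, Fintype.sum_prod_type, Fintype.sum_eq_single b fun a ha => by simp [ha]]
  simp [← Finset.mul_sum, hQ_sum]

theorem snd [Fintype S] [Finite S'] {P : S → S → ℝ} {Q : S' → S' → ℝ} {X : ℕ → Ω → S × S'}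
    (hX : ∀ k, Measurable (X k)) (hP : ∀ i j, 0 ≤ P i j) (hQ : ∀ i j, 0 ≤ Q i j)
    (hP_sum : ∀ i, ∑ j, P i j = 1)
    (h : IsMarkovChain μ X fun a b => P a.1 b.1 * Q a.2 b.2) :
    IsMarkovChain μ (fun k ω => (X k ω).2) Q := by
  classical
  cases nonempty_fintype S'
  refine h.map hX (fun a b => mul_nonneg (hP _ _) (hQ _ _)) hQ Prod.snd fun i b => ?_
  rw [Finset.sum_filter, Fintype.sum_prod_type_right,
    Fintype.sum_eq_single b fun a ha => by simp [ha]]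
  simp [← Finset.sum_mul, hP_sum]

theorem of_driven [Finite S] [Finite S'] [DecidableEq S] {π : S → S'} {φ : S → S' → S}
    (hπ : ∀ i b, π (φ i b) = b) (hX : ∀ k, Measurable (X k)) (hR : ∀ a b, 0 ≤ R a b)
    (h : IsMarkovChain μ (fun k ω => π (X k ω)) R)
    (h0 : (X 0).FactorsThrough fun ω => π (X 0 ω))
    (hφ : ∀ k ω, X (k + 1) ω = φ (X k ω) (π (X (k + 1) ω))) :
    IsMarkovChain μ X fun i j => if j = φ i (π j) then R (π i) (π j) else 0 := by
  have hX_factors (k) : (X k).FactorsThrough (history (fun k ω => π (X k ω)) k) := by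
    induction k with
    | zero => exact fun ω ω' hω => h0 (history_eq_history_iff.1 hω 0 le_rfl)
    | succ k ih =>
      intro ω ω' hω
      have base : π (X (k + 1) ω) = π (X (k + 1) ω') := history_eq_history_iff.1 hω _ le_rfl
      rw [hφ k ω, hφ k ω', base, ih (factorsThrough_history_history k.le_succ hω)]
  cases nonempty_fintype S
  cases nonempty_fintype S'
  refine of_lintegral_succ hX (fun i j => by split_ifs <;> simp [hR]) fun k F hF => ?_
  have hF' : (fun ω b => F ω (φ (X k ω) b)).FactorsThrough
      (history (fun k ω => π (X k ω)) k) := fun ω ω' hω => by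
    have past : history X k ω = history X k ω' := history_eq_history_iff.2 fun l hl =>
      hX_factors l (factorsThrough_history_history hl hω)
    simp only [hF past, hX_factors k hω]
  calc ∫⁻ ω, F ω (X (k + 1) ω) ∂μ
      = ∫⁻ ω, F ω (φ (X k ω) (π (X (k + 1) ω))) ∂μ := by simp only [← hφ]
    _ = ∫⁻ ω, ∑ b, ENNReal.ofReal (R (π (X k ω)) b) * F ω (φ (X k ω) b) ∂μ :=
        h.lintegral_succ (F := fun ω b => F ω (φ (X k ω) b))
          (fun k => (measurable_of_finite π).comp (hX k)) hR hF'
    _ = _ := lintegral_congr fun ω => ?_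
  refine (Finset.sum_of_injOn (φ (X k ω)) (fun b _ c _ hbc => ?_) (by simp)
    (fun j _ hj => ?_) fun b _ => ?_)
  · rw [← hπ (X k ω) b, hbc, hπ]
  · rw [if_neg fun hj' => hj ⟨π j, by simp, hj'.symm⟩]
    simp
  · rw [hπ, if_pos rfl]

end Map

end IsMarkovChain

/-! ### The extended chain -/

section ExtendedChain

variable {NN MM T : ℕ}

/-- The component `(α, β)` of an extended state, which evolves as `(r, s)`. -/
def modePair (χ : XT NN MM T) : Fin NN × Fin MM := (χ.1, χ.2.1)

theorem intToFin_zero (T : ℕ) [NeZero T] : intToFin T 0 = 0 := by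
  simp [intToFin]

theorem intToFin_natCast_val [NeZero T] (d : Fin T) : intToFin T (d : ℤ) = d := by
  ext
  simp [intToFin, ← Int.natCast_emod, Nat.mod_eq_of_lt d.2]

theorem intToFin_add_one [NeZero T] (a : ℤ) : intToFin T (a + 1) = intToFin T a + 1 := by
  have hT : (T : ℤ) ≠ 0 := Nat.cast_ne_zero.2 (NeZero.ne T)
  ext
  zify
  simp [intToFin, Fin.val_add, Int.emod_nonneg _ hT]

variable [NeZero T] {P : Matrix (Fin NN) (Fin NN) ℝ} {Q : Matrix (Fin MM) (Fin MM) ℝ}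
  {f : Fin MM → Bool}

/-- The deterministic update of the extended state once the next value `(α', β')` of `(r, s)` is
known: the memory is refreshed when `β'` triggers an observation, and ages otherwise. -/
def extStep (f : Fin MM → Bool) (χ : XT NN MM T) (b : Fin NN × Fin MM) : XT NN MM T :=
  if f b.2 = true then (b.1, b.2, b.1, 0) else (b.1, b.2, χ.2.2.1, χ.2.2.2 + 1)

theorem modePair_extStep (χ : XT NN MM T) (b : Fin NN × Fin MM) :
    modePair (extStep f χ b) = b := by
  unfold extStep modePair
  split_ifs <;> rfl

theorem inX_extStep (χ : XT NN MM T) (b : Fin NN × Fin MM) : inX f (extStep f χ b) := by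
  unfold extStep
  split_ifs with h
  · exact fun _ => ⟨rfl, rfl⟩
  · exact fun h' => absurd h' h

theorem pbar_eq_ite (χ χ' : XT NN MM T) :
    pbar P Q f χ χ' = if χ' = extStep f χ (modePair χ') then
      P (modePair χ).1 (modePair χ').1 * Q (modePair χ).2 (modePair χ').2 else 0 := by
  obtain ⟨a, b, c, d⟩ := χ'
  by_cases hb : f b = true
  · simp [pbar, extStep, modePair, hb, eq_comm]
  · simp [pbar, extStep, modePair, hb]

theorem pbar_nonneg (hP : ∀ i j, 0 ≤ P i j) (hQ : ∀ i j, 0 ≤ Q i j) (χ χ' : XT NN MM T) :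
    0 ≤ pbar P Q f χ χ' := by
  rw [pbar_eq_ite]
  split_ifs
  exacts [mul_nonneg (hP _ _) (hQ _ _), le_rfl]

theorem sum_pbar_fibre (χ : XT NN MM T) (b : Fin NN × Fin MM) :
    ∑ χ' with modePair χ' = b, pbar P Q f χ χ' = P (modePair χ).1 b.1 * Q (modePair χ).2 b.2 := by
  rw [Finset.sum_eq_single_of_mem (extStep f χ b) (by simp [modePair_extStep]) fun χ' hχ' hne => by
    rw [pbar_eq_ite, (Finset.mem_filter.1 hχ').2, if_neg hne]]
  rw [pbar_eq_ite, modePair_extStep, if_pos rfl]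

section Path

variable {Ω : Type} (r : ℕ → Ω → Fin NN) (s : ℕ → Ω → Fin MM) (f : Fin MM → Bool) (τ₀ : ℤ)
  (σ₀ : Fin NN)

theorem rbarProc_zero (ω : Ω) :
    rbarProc (T := T) r s f τ₀ σ₀ 0 ω
      = if f (s 0 ω) = true then (r 0 ω, s 0 ω, r 0 ω, 0)
        else (r 0 ω, s 0 ω, σ₀, intToFin T (-τ₀)) := by
  simp only [rbarProc, sigmaProc, rhoProc, tauZ, Nat.le_zero, exists_eq_left]
  split_ifs <;> simp [intToFin_zero]

theorem rbarProc_succ (k : ℕ) (ω : Ω) :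
    rbarProc (T := T) r s f τ₀ σ₀ (k + 1) ω
      = extStep f (rbarProc r s f τ₀ σ₀ k ω) (r (k + 1) ω, s (k + 1) ω) := by
  unfold extStep
  split_ifs with observed
  · have hex : ∃ j ≤ k + 1, f (s j ω) = true := ⟨k + 1, le_rfl, observed⟩
    simp [rbarProc, sigmaProc, rhoProc, tauZ, if_pos hex,
      Nat.findGreatest_eq (P := fun j => f (s j ω) = true) observed, intToFin_zero]
  · have hiff : (∃ j ≤ k + 1, f (s j ω) = true) ↔ ∃ j ≤ k, f (s j ω) = true := by
      simp only [Nat.le_succ_iff, or_and_right, exists_or, exists_eq_left]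
      exact or_iff_left observed
    simp only [rbarProc, sigmaProc, rhoProc, tauZ, hiff,
      Nat.findGreatest_of_not (P := fun j => f (s j ω) = true) observed, ← intToFin_add_one]
    congr 4
    push_cast
    ring

theorem inX_rbarProc (k : ℕ) (ω : Ω) : inX f (rbarProc (T := T) r s f τ₀ σ₀ k ω) := by
  cases k with
  | zero =>
    rw [rbarProc_zero]
    split_ifs with h
    · exact fun _ => ⟨rfl, rfl⟩
    · exact fun h' => absurd h' h
  | succ k =>
    rw [rbarProc_succ]
    exact inX_extStep _ _

theorem factorsThrough_rbarProc_zero :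
    (rbarProc (T := T) r s f τ₀ σ₀ 0).FactorsThrough fun ω => (r 0 ω, s 0 ω) := by
  intro ω ω' hω
  obtain ⟨hr, hs⟩ := Prod.ext_iff.1 hω
  simp only at hr hs
  simp only [rbarProc_zero, hr, hs]

theorem factorsThrough_rbarProc (k : ℕ) :
    (rbarProc (T := T) r s f τ₀ σ₀ k).FactorsThrough
      (history (fun k ω => (r k ω, s k ω)) k) := by
  induction k with
  | zero => exact fun ω ω' hω =>
      factorsThrough_rbarProc_zero r s f τ₀ σ₀ (factorsThrough_history_apply le_rfl hω)
  | succ k ih =>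
    intro ω ω' hω
    rw [rbarProc_succ, rbarProc_succ, ih (factorsThrough_history_history k.le_succ hω)]
    exact congrArg _ (factorsThrough_history_apply le_rfl hω)

variable {s f}

theorem rbarProc_zero_of_inX {χ : XT NN MM T} (hχ : inX f χ) {r : ℕ → Ω → Fin NN} {ω : Ω}
    (h : (r 0 ω, s 0 ω) = modePair χ) :
    rbarProc r s f (-(χ.2.2.2 : ℤ)) χ.2.2.1 0 ω = χ := by
  obtain ⟨a, b, c, d⟩ := χ
  obtain ⟨hr, hs⟩ := Prod.ext_iff.1 h
  simp only [modePair] at hr hs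
  rw [rbarProc_zero, hr, hs, neg_neg, intToFin_natCast_val]
  split_ifs with hb
  · obtain ⟨rfl, rfl⟩ : a = c ∧ d = 0 := hχ hb
    rfl
  · rfl

end Path

end ExtendedChain

section Realizations

variable {NN MM T : ℕ} [NeZero T] {P : Matrix (Fin NN) (Fin NN) ℝ}
  {Q : Matrix (Fin MM) (Fin MM) ℝ} {f : Fin MM → Bool}

attribute [instance] MJLSReal.inst MJLSReal.prob ThetaReal.inst ThetaReal.prob

theorem MJLSReal.measurable_pair (S : MJLSReal NN MM P Q) (k : ℕ) :
    Measurable fun ω => (S.r k ω, S.s k ω) :=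
  (S.meas_r k).prodMk (S.meas_s k)

theorem MJLSReal.measurable_rbarProc (S : MJLSReal NN MM P Q) (τ₀ : ℤ) (σ₀ : Fin NN) (k : ℕ) :
    Measurable (rbarProc (T := T) S.r S.s f τ₀ σ₀ k) :=
  measurable_of_factorsThrough_history S.measurable_pair
    (factorsThrough_rbarProc S.r S.s f τ₀ σ₀ k)

/-- The extended process `r̄` of a realization of `(r, s)`, as a realization of `θ`. -/
def MJLSReal.extended (hP : ∀ i j, 0 ≤ P i j) (hQ : ∀ i j, 0 ≤ Q i j) (S : MJLSReal NN MM P Q)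
    (f : Fin MM → Bool) (τ₀ : ℤ) (σ₀ : Fin NN) : ThetaReal NN MM T P Q f where
  Ω := S.Ω
  inst := S.inst
  μ := S.μ
  prob := S.prob
  θ := rbarProc S.r S.s f τ₀ σ₀
  meas := S.measurable_rbarProc τ₀ σ₀
  mem := inX_rbarProc S.r S.s f τ₀ σ₀
  markov := by
    have hPQ (a b : Fin NN × Fin MM) : 0 ≤ P a.1 b.1 * Q a.2 b.2 := mul_nonneg (hP _ _) (hQ _ _)
    have h := IsMarkovChain.of_driven (φ := extStep f) modePair_extStep
      (S.measurable_rbarProc (T := T) τ₀ σ₀) hPQ (S.markov_r.prodMk S.markov_s S.indep)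
      (factorsThrough_rbarProc_zero S.r S.s f τ₀ σ₀) (rbarProc_succ S.r S.s f τ₀ σ₀)
    convert h using 3
    exact pbar_eq_ite _ _

/-- The components `(r, s)` of a realization of `θ` with deterministic initial state. -/
def ThetaReal.base (hP : ∀ i j, 0 ≤ P i j) (hP1 : ∀ i, ∑ j, P i j = 1) (hQ : ∀ i j, 0 ≤ Q i j)
    (hQ1 : ∀ i, ∑ j, Q i j = 1) (S : ThetaReal NN MM T P Q f) (χ : XT NN MM T)
    (h0 : ∀ᵐ ω ∂S.μ, S.θ 0 ω = χ) : MJLSReal NN MM P Q :=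
  have hpair : IsMarkovChain S.μ (fun k ω => modePair (S.θ k ω))
      fun a b => P a.1 b.1 * Q a.2 b.2 :=
    S.markov.map S.meas (pbar_nonneg hP hQ) (fun _ _ => mul_nonneg (hP _ _) (hQ _ _)) modePair
      sum_pbar_fibre
  have hmeas k : Measurable fun ω => modePair (S.θ k ω) :=
    (measurable_of_finite modePair).comp (S.meas k)
  have hr : IsMarkovChain S.μ (fun k ω => (modePair (S.θ k ω)).1) P := hpair.fst hmeas hP hQ hQ1
  have hs : IsMarkovChain S.μ (fun k ω => (modePair (S.θ k ω)).2) Q := hpair.snd hmeas hP hQ hP1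
  { Ω := S.Ω
    inst := S.inst
    μ := S.μ
    prob := S.prob
    r := fun k ω => (modePair (S.θ k ω)).1
    s := fun k ω => (modePair (S.θ k ω)).2
    meas_r := fun k => (hmeas k).fst
    meas_s := fun k => (hmeas k).snd
    markov_r := hr
    markov_s := hs
    indep := hr.indepFun_of_prodMk (fun k => (hmeas k).fst) (fun k => (hmeas k).snd) hs hpair <| by
      refine (indepFun_const_left (modePair χ).1 _).congr ?_ .rfl
      filter_upwards [h0] with ω hω
      rw [hω] }

theorem ThetaReal.ae_rbarProc_base_eq (hP : ∀ i j, 0 ≤ P i j) (hP1 : ∀ i, ∑ j, P i j = 1)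
    (hQ : ∀ i j, 0 ≤ Q i j) (hQ1 : ∀ i, ∑ j, Q i j = 1) (S : ThetaReal NN MM T P Q f)
    {χ : XT NN MM T} (hχ : inX f χ) (h0 : ∀ᵐ ω ∂S.μ, S.θ 0 ω = χ) :
    ∀ᵐ ω ∂S.μ, ∀ k, rbarProc (S.base hP hP1 hQ hQ1 χ h0).r (S.base hP hP1 hQ hQ1 χ h0).s f
      (-(χ.2.2.2 : ℤ)) χ.2.2.1 k ω = S.θ k ω := by
  filter_upwards [h0, ae_all_iff.2 fun k => S.markov.ae_ne_zero S.meas (pbar_nonneg hP hQ) k]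
    with ω hω hstep k
  induction k with
  | zero => exact (rbarProc_zero_of_inX hχ (congrArg modePair hω)).trans hω.symm
  | succ k ih =>
    have next : S.θ (k + 1) ω = extStep f (S.θ k ω) (modePair (S.θ (k + 1) ω)) := by
      by_contra hne
      exact hstep k (by rw [pbar_eq_ite, if_neg hne])
    rw [rbarProc_succ, ih]
    exact next.symm

end Realizations

/-! ### Equivalence of the two closed-loop systems -/

section Trajectory

variable {Ω S : Type} {n q : ℕ} {A : S → Matrix (Fin n) (Fin n) ℝ}
  {E : S → Matrix (Fin n) (Fin q) ℝ} {X X' : ℕ → Ω → S} {w w' : ℕ → Ω → Fin q → ℝ}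
  {x₀ : Fin n → ℝ}

theorem traj_congr {ω ω' : Ω} {k : ℕ} (hX : ∀ l < k, X l ω = X' l ω')
    (hw : ∀ l < k, w l ω = w' l ω') : traj A E X w x₀ k ω = traj A E X' w' x₀ k ω' := by
  induction k with
  | zero => rfl
  | succ k ih =>
    simp only [traj, hX k k.lt_succ_self, hw k k.lt_succ_self,
      ih (fun l hl => hX l (hl.trans k.lt_succ_self)) fun l hl => hw l (hl.trans k.lt_succ_self)]

theorem factorsThrough_traj (hw : ∀ k, (w k).FactorsThrough (history X k)) (k : ℕ) :
    (traj A E X w x₀ k).FactorsThrough (history X k) := fun _ _ h =>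
  traj_congr (fun l hl => history_eq_history_iff.1 h l hl.le) fun l hl =>
    hw l (factorsThrough_history_history hl.le h)

theorem exists_adapted_modification [MeasurableSpace Ω] {μ : Measure Ω} {β : Type*}
    {w : ℕ → Ω → β} (hX : ∀ᵐ ω ∂μ, ∀ k, X' k ω = X k ω)
    (hw : ∀ k, (w k).FactorsThrough (history X k)) [Nonempty β] :
    ∃ w' : ℕ → Ω → β, (∀ k, (w' k).FactorsThrough (history X' k)) ∧
      ∀ᵐ ω ∂μ, ∀ k, w' k ω = w k ω := by
  choose g hg using fun k => Function.factorsThrough_iff _ |>.1 (hw k)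
  refine ⟨fun k => g k ∘ history X' k, fun k ω ω' h => congrArg (g k) h, ?_⟩
  filter_upwards [hX] with ω hω k
  rw [hg, Function.comp_apply, Function.comp_apply, history_eq_history_iff.2 fun l _ => hω l]

theorem traj_comp {S' : Type} (φ : S' → S) (X : ℕ → Ω → S') (w : ℕ → Ω → Fin q → ℝ)
    (x₀ : Fin n → ℝ) (k : ℕ) (ω : Ω) :
    traj (A ∘ φ) (E ∘ φ) X w x₀ k ω = traj A E (fun k ω => φ (X k ω)) w x₀ k ω := by
  induction k with
  | zero => rfl
  | succ k ih => simp only [traj, ih, Function.comp_apply]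

end Trajectory

section Equivalence

variable {NN MM T : ℕ} [NeZero T] {P : Matrix (Fin NN) (Fin NN) ℝ}
  {Q : Matrix (Fin MM) (Fin MM) ℝ} {f : Fin MM → Bool}

theorem measurable_sigFiltBar_iff {β : Type*} [MeasurableSpace β] [MeasurableSingletonClass β]
    (S : ThetaReal NN MM T P Q f) {k : ℕ} {w : S.Ω → β} :
    Measurable[sigFiltBar S k] w ↔ w.FactorsThrough (history S.θ k) := by
  rw [sigFiltBar, ← comap_history, measurable_comap_iff_factorsThrough]

theorem measurable_sigFiltSigma_iff {β : Type*} [MeasurableSpace β] [MeasurableSingletonClass β]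
    (S : MJLSReal NN MM P Q) {k : ℕ} {w : S.Ω → β} :
    Measurable[sigFiltSigma S k] w
      ↔ w.FactorsThrough (history (fun k ω => (S.r k ω, S.s k ω)) k) := by
  have generated : sigFiltSigma S k
      = MeasurableSpace.comap (history (fun k ω => (S.r k ω, S.s k ω)) k) MeasurableSpace.pi := by
    rw [comap_history]
    exact iSup_congr fun j => iSup_congr fun _ =>
      (MeasurableSpace.comap_prodMk (S.r j) (S.s j)).symm
  rw [generated, measurable_comap_iff_factorsThrough]

theorem exists_ae_rbarProc_zero_eq {Ω : Type} [MeasurableSpace Ω] {μ : Measure Ω}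
    {r : ℕ → Ω → Fin NN} {s : ℕ → Ω → Fin MM} {r₀ : Fin NN} {s₀ : Fin MM}
    (h0 : ∀ᵐ ω ∂μ, r 0 ω = r₀ ∧ s 0 ω = s₀) (f : Fin MM → Bool) (τ₀ : ℤ) (σ₀ : Fin NN) :
    ∃ χ : XT NN MM T, inX f χ ∧ ∀ᵐ ω ∂μ, rbarProc r s f τ₀ σ₀ 0 ω = χ := by
  refine ⟨_, inX_rbarProc (fun _ (_ : Unit) => r₀) (fun _ _ => s₀) f τ₀ σ₀ 0 (), ?_⟩
  filter_upwards [h0] with ω hω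
  rw [rbarProc_zero, rbarProc_zero, hω.1, hω.2]

variable {n m q ℓ : ℕ} {A : Fin NN → Matrix (Fin n) (Fin n) ℝ}
  {B : Fin NN → Matrix (Fin n) (Fin m) ℝ} {C : Fin NN → Matrix (Fin ℓ) (Fin n) ℝ}
  {D : Fin NN → Matrix (Fin ℓ) (Fin m) ℝ} {E : Fin NN → Matrix (Fin n) (Fin q) ℝ}
  {K : Fin NN → Fin T → Matrix (Fin m) (Fin n) ℝ} {γ : ℝ}

theorem MeanSquareStableBar.meanSquareStable (hP : ∀ i j, 0 ≤ P i j) (hQ : ∀ i j, 0 ≤ Q i j)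
    (h : MeanSquareStableBar P Q f A B E K) : MeanSquareStable P Q f A B E K := by
  obtain ⟨c, hc, lam, h_lam, h_lam', bound⟩ := h
  refine ⟨c, hc, lam, h_lam, h_lam', fun S τ₀ _ σ₀ r₀ s₀ h0 x₀ k => ?_⟩
  obtain ⟨χ, hχ, h0'⟩ := exists_ae_rbarProc_zero_eq (T := T) h0 f τ₀ σ₀
  exact bound (S.extended hP hQ f τ₀ σ₀) χ hχ h0' x₀ k

theorem MeanSquareStable.meanSquareStableBar (hP : ∀ i j, 0 ≤ P i j) (hP1 : ∀ i, ∑ j, P i j = 1)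
    (hQ : ∀ i j, 0 ≤ Q i j) (hQ1 : ∀ i, ∑ j, Q i j = 1) (h : MeanSquareStable P Q f A B E K) :
    MeanSquareStableBar P Q f A B E K := by
  obtain ⟨c, hc, lam, h_lam, h_lam', bound⟩ := h
  refine ⟨c, hc, lam, h_lam, h_lam', fun S χ hχ h0 x₀ k => ?_⟩
  have h0' : ∀ᵐ ω ∂S.μ, (S.θ 0 ω).1 = χ.1 ∧ (S.θ 0 ω).2.1 = χ.2.1 := by
    filter_upwards [h0] with ω hω
    simp only [hω, and_self]
  refine (lintegral_congr_ae ?_).trans_le (bound (S.base hP hP1 hQ hQ1 χ h0)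
    (-(χ.2.2.2 : ℤ)) (by simp) χ.2.2.1 χ.1 χ.2.1 h0' x₀ k)
  filter_upwards [S.ae_rbarProc_base_eq hP hP1 hQ hQ1 hχ h0] with ω hω
  exact congrArg sqE (traj_congr (fun l _ => (hω l).symm) fun _ _ => rfl)

theorem HinfSqLtBar.hinfSqLtSigma (hP : ∀ i j, 0 ≤ P i j) (hQ : ∀ i j, 0 ≤ Q i j)
    (h : HinfSqLtBar P Q f A B C D E K γ) : HinfSqLtSigma P Q f A B C D E K γ := by
  obtain ⟨c, hc, hcγ, bound⟩ := h
  refine ⟨c, hc, hcγ, fun S τ₀ _ σ₀ χ hχ h0 w hw => ?_⟩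
  refine bound (S.extended hP hQ f τ₀ σ₀) χ hχ h0 w fun k => ?_
  refine (measurable_sigFiltBar_iff _).2 fun ω ω' hω =>
    (measurable_sigFiltSigma_iff S).1 (hw k) (history_eq_history_iff.2 fun l hl => ?_)
  exact congrArg modePair (history_eq_history_iff.1 hω l hl)

theorem HinfSqLtSigma.hinfSqLtBar (hP : ∀ i j, 0 ≤ P i j) (hP1 : ∀ i, ∑ j, P i j = 1)
    (hQ : ∀ i j, 0 ≤ Q i j) (hQ1 : ∀ i, ∑ j, Q i j = 1)
    (h : HinfSqLtSigma P Q f A B C D E K γ) : HinfSqLtBar P Q f A B C D E K γ := by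
  obtain ⟨c, hc, hcγ, bound⟩ := h
  refine ⟨c, hc, hcγ, fun S χ hχ h0 w hw hw_pos hw_top => ?_⟩
  set base := S.base hP hP1 hQ hQ1 χ h0
  set θ' := rbarProc (T := T) base.r base.s f (-(χ.2.2.2 : ℤ)) χ.2.2.1
  have hθ : ∀ᵐ ω ∂S.μ, ∀ k, θ' k ω = S.θ k ω := S.ae_rbarProc_base_eq hP hP1 hQ hQ1 hχ h0
  obtain ⟨w', hw', hww'⟩ := exists_adapted_modification hθ fun k =>
    (measurable_sigFiltBar_iff S).1 (hw k)
  have adapted k : Measurable[sigFiltSigma base k] (w' k) :=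
    (measurable_sigFiltSigma_iff base).2 fun ω ω' hω =>
      hw' k (history_eq_history_iff.2 fun l hl => factorsThrough_rbarProc base.r base.s f _ _ l
        (factorsThrough_history_history hl hω))
  have energy_w' : ∑' k, ∫⁻ ω, sqE (w' k ω) ∂S.μ = ∑' k, ∫⁻ ω, sqE (w k ω) ∂S.μ := by
    refine tsum_congr fun k => lintegral_congr_ae ?_
    filter_upwards [hww'] with ω hω
    rw [hω]
  have init : ∀ᵐ ω ∂S.μ, θ' 0 ω = χ := by
    filter_upwards [hθ, h0] with ω hω hω0
    rw [hω, hω0]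
  rw [← energy_w'] at hw_pos hw_top ⊢
  refine (tsum_congr fun k => lintegral_congr_ae ?_).trans_le
    (bound base _ (by simp) _ χ hχ init w' adapted hw_pos hw_top)
  filter_upwards [hθ, hww'] with ω hω hω'
  rw [← hω, traj_congr (fun l _ => (hω l).symm) fun l _ => (hω' l).symm]
  rfl

end Equivalence

/-! ### Storage functions for jump linear systems -/

theorem tsum_le_tsum_of_add_le_add {a b c : ℕ → ENNReal} (h0 : a 0 = 0)
    (h : ∀ k, a (k + 1) + b k ≤ a k + c k) : ∑' k, b k ≤ ∑' k, c k := by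
  have partial_sums (N) : a N + ∑ k ∈ Finset.range N, b k ≤ ∑ k ∈ Finset.range N, c k := by
    induction N with
    | zero => simp [h0]
    | succ N ih =>
      rw [Finset.sum_range_succ, Finset.sum_range_succ]
      calc a (N + 1) + (∑ k ∈ Finset.range N, b k + b N)
          = a (N + 1) + b N + ∑ k ∈ Finset.range N, b k := by ring
        _ ≤ a N + c N + ∑ k ∈ Finset.range N, b k := by gcongr ?_ + _; exact h N
        _ = a N + ∑ k ∈ Finset.range N, b k + c N := by ring
        _ ≤ ∑ k ∈ Finset.range N, c k + c N := by gcongr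
  exact ENNReal.tsum_le_of_sum_range_le fun N =>
    (le_add_self.trans (partial_sums N)).trans (ENNReal.sum_le_tsum _)

theorem sqE_eq_ofReal_dotProduct {d : ℕ} (v : Fin d → ℝ) : sqE v = ENNReal.ofReal (v ⬝ᵥ v) := by
  simp only [sqE, dotProduct, sq]

theorem dotProduct_self_nonneg {ι R : Type*} [Fintype ι] [Ring R] [LinearOrder R]
    [IsOrderedRing R] (v : ι → R) : 0 ≤ v ⬝ᵥ v :=
  Finset.sum_nonneg fun i _ => mul_self_nonneg (v i)

section StorageFunction

variable {S : Type} [Fintype S] {n q ℓ : ℕ}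

/-- `V` is a stochastic storage function for the jump linear system with modes in `S`, mode
transition probabilities `p`, dynamics `x⁺ = A i x + E i w` and output `z = C i x`: it is
comparable to `‖x‖²`, and the supply rate `γ ‖w‖² - ‖z‖²` exceeds its expected increase with
margin `ε` in both `V` and `‖w‖²`. -/
structure IsStorageFunction (p : S → S → ℝ) (A : S → Matrix (Fin n) (Fin n) ℝ)
    (E : S → Matrix (Fin n) (Fin q) ℝ) (C : S → Matrix (Fin ℓ) (Fin n) ℝ) (γ ε : ℝ)
    (V : S → (Fin n → ℝ) → ℝ) : Prop where
  lower (i x) : ε * (x ⬝ᵥ x) ≤ V i x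
  upper (i x) : ε * V i x ≤ x ⬝ᵥ x
  dissipation (i x w) : ∑ j, p i j * V j (A i *ᵥ x + E i *ᵥ w) + C i *ᵥ x ⬝ᵥ C i *ᵥ x
    ≤ (1 - ε) * V i x + (γ - ε) * (w ⬝ᵥ w)

namespace IsStorageFunction

variable {p : S → S → ℝ} {A : S → Matrix (Fin n) (Fin n) ℝ} {E : S → Matrix (Fin n) (Fin q) ℝ}
  {C : S → Matrix (Fin ℓ) (Fin n) ℝ} {γ ε : ℝ} {V : S → (Fin n → ℝ) → ℝ}

theorem nonneg (hV : IsStorageFunction p A E C γ ε V) (hε : 0 ≤ ε) (i : S) (x : Fin n → ℝ) :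
    0 ≤ V i x :=
  (mul_nonneg hε (dotProduct_self_nonneg x)).trans (hV.lower i x)

variable {Ω : Type} {mΩ : MeasurableSpace Ω} {μ : Measure Ω} [IsProbabilityMeasure μ]
  [MeasurableSpace S] [MeasurableSingletonClass S] {X : ℕ → Ω → S}

theorem lintegral_succ_add_le (hV : IsStorageFunction p A E C γ ε V) (hε : 0 ≤ ε) (hε1 : ε ≤ 1)
    (hεγ : ε ≤ γ) (hp : ∀ i j, 0 ≤ p i j) (hX : ∀ k, Measurable (X k)) (h : IsMarkovChain μ X p)
    {w : ℕ → Ω → Fin q → ℝ} (hw : ∀ k, (w k).FactorsThrough (history X k)) (x₀ : Fin n → ℝ)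
    (k : ℕ) :
    ∫⁻ ω, ENNReal.ofReal (V (X (k + 1) ω) (traj A E X w x₀ (k + 1) ω)) ∂μ
        + ∫⁻ ω, sqE (C (X k ω) *ᵥ traj A E X w x₀ k ω) ∂μ
      ≤ ENNReal.ofReal (1 - ε) * ∫⁻ ω, ENNReal.ofReal (V (X k ω) (traj A E X w x₀ k ω)) ∂μ
        + ENNReal.ofReal (γ - ε) * ∫⁻ ω, sqE (w k ω) ∂μ := by
  set x := traj A E X w x₀
  have hx := factorsThrough_traj (A := A) (E := E) (x₀ := x₀) hw k
  have next : (fun ω j => ENNReal.ofReal (V j (x (k + 1) ω))).FactorsThrough (history X k) :=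
    fun ω ω' hω => by
      simp only [x, traj, factorsThrough_history_apply le_rfl hω, hw k hω, hx hω]
  have output : Measurable fun ω => sqE (C (X k ω) *ᵥ x k ω) :=
    measurable_of_factorsThrough_history (k := k) hX fun ω ω' hω => by
      simp only [factorsThrough_history_apply le_rfl hω, x, hx hω]
  have input : Measurable fun ω => ENNReal.ofReal (γ - ε) * sqE (w k ω) :=
    measurable_of_factorsThrough_history (k := k) hX fun ω ω' hω => by simp only [hw k hω]
  rw [h.lintegral_succ hX hp next, ← lintegral_add_right _ output,
    ← lintegral_const_mul' _ _ ENNReal.ofReal_ne_top,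
    ← lintegral_const_mul' _ _ ENNReal.ofReal_ne_top, ← lintegral_add_right _ input]
  refine lintegral_mono fun ω => ?_
  have expected (j) : 0 ≤ p (X k ω) j * V j (x (k + 1) ω) := mul_nonneg (hp _ _) (hV.nonneg hε _ _)
  simp only [sqE_eq_ofReal_dotProduct, ← ENNReal.ofReal_mul (hp _ _)]
  rw [← ENNReal.ofReal_sum_of_nonneg fun j _ => expected j,
    ← ENNReal.ofReal_add (Finset.sum_nonneg fun j _ => expected j) (dotProduct_self_nonneg _),
    ← ENNReal.ofReal_mul (sub_nonneg.2 hε1), ← ENNReal.ofReal_mul (sub_nonneg.2 hεγ),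
    ← ENNReal.ofReal_add (mul_nonneg (sub_nonneg.2 hε1) (hV.nonneg hε _ _))
      (mul_nonneg (sub_nonneg.2 hεγ) (dotProduct_self_nonneg _))]
  exact ENNReal.ofReal_le_ofReal (hV.dissipation (X k ω) (x k ω) (w k ω))

theorem lintegral_sqE_traj_le (hV : IsStorageFunction p A E C γ ε V) (hε : 0 < ε) (hε1 : ε ≤ 1)
    (hεγ : ε ≤ γ) (hp : ∀ i j, 0 ≤ p i j) (hX : ∀ k, Measurable (X k)) (h : IsMarkovChain μ X p)
    (x₀ : Fin n → ℝ) (k : ℕ) :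
    ∫⁻ ω, sqE (traj A E X (fun _ _ => 0) x₀ k ω) ∂μ
      ≤ ENNReal.ofReal (ε⁻¹ * ε⁻¹ * (1 - ε) ^ k * (x₀ ⬝ᵥ x₀)) := by
  set x := traj A E X (fun _ _ => 0) x₀
  have decay : ∫⁻ ω, ENNReal.ofReal (V (X k ω) (x k ω)) ∂μ
      ≤ ENNReal.ofReal ((1 - ε) ^ k * (ε⁻¹ * (x₀ ⬝ᵥ x₀))) := by
    induction k with
    | zero =>
      rw [pow_zero, one_mul]
      refine (lintegral_mono (g := fun _ => ENNReal.ofReal (ε⁻¹ * (x₀ ⬝ᵥ x₀))) fun ω => ?_).trans_eq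
        (by simp)
      exact ENNReal.ofReal_le_ofReal ((le_inv_mul_iff₀ hε).2 (hV.upper (X 0 ω) x₀))
    | succ k ih =>
      have step := hV.lintegral_succ_add_le hε.le hε1 hεγ hp hX h (w := fun _ _ => 0)
        (fun _ _ _ _ => rfl) x₀ k
      simp only [sqE_eq_ofReal_dotProduct, dotProduct_zero, ENNReal.ofReal_zero, lintegral_zero,
        mul_zero, add_zero] at step
      refine (le_self_add.trans step).trans ?_
      rw [pow_succ', mul_assoc, ENNReal.ofReal_mul (sub_nonneg.2 hε1)]
      gcongr
  calc ∫⁻ ω, sqE (x k ω) ∂μ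
      ≤ ∫⁻ ω, ENNReal.ofReal ε⁻¹ * ENNReal.ofReal (V (X k ω) (x k ω)) ∂μ := by
        refine lintegral_mono fun ω => ?_
        rw [sqE_eq_ofReal_dotProduct, ← ENNReal.ofReal_mul (inv_nonneg.2 hε.le)]
        exact ENNReal.ofReal_le_ofReal ((le_inv_mul_iff₀ hε).2 (hV.lower _ _))
    _ = ENNReal.ofReal ε⁻¹ * ∫⁻ ω, ENNReal.ofReal (V (X k ω) (x k ω)) ∂μ :=
        lintegral_const_mul' _ _ ENNReal.ofReal_ne_top
    _ ≤ ENNReal.ofReal ε⁻¹ * ENNReal.ofReal ((1 - ε) ^ k * (ε⁻¹ * (x₀ ⬝ᵥ x₀))) := by gcongr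
    _ = ENNReal.ofReal (ε⁻¹ * ε⁻¹ * (1 - ε) ^ k * (x₀ ⬝ᵥ x₀)) := by
        rw [← ENNReal.ofReal_mul (inv_nonneg.2 hε.le)]
        ring_nf

theorem tsum_lintegral_sqE_output_le (hV : IsStorageFunction p A E C γ ε V) (hε : 0 < ε)
    (hε1 : ε ≤ 1) (hεγ : ε ≤ γ) (hp : ∀ i j, 0 ≤ p i j) (hX : ∀ k, Measurable (X k))
    (h : IsMarkovChain μ X p) {w : ℕ → Ω → Fin q → ℝ}
    (hw : ∀ k, (w k).FactorsThrough (history X k)) :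
    ∑' k, ∫⁻ ω, sqE (C (X k ω) *ᵥ traj A E X w 0 k ω) ∂μ
      ≤ ENNReal.ofReal (γ - ε) * ∑' k, ∫⁻ ω, sqE (w k ω) ∂μ := by
  have hV0 (i) : V i 0 ≤ 0 := nonpos_of_mul_nonpos_right (by simpa using hV.upper i 0) hε
  rw [← ENNReal.tsum_mul_left]
  refine tsum_le_tsum_of_add_le_add
    (a := fun k => ∫⁻ ω, ENNReal.ofReal (V (X k ω) (traj A E X w 0 k ω)) ∂μ)
    (by simp [traj, ENNReal.ofReal_eq_zero.2 (hV0 _)]) fun k => ?_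
  refine (hV.lintegral_succ_add_le hε.le hε1 hεγ hp hX h hw 0 k).trans ?_
  gcongr
  refine mul_le_of_le_one_left' ?_
  simpa using hε.le

end IsStorageFunction

end StorageFunction

section ExtendedState

variable {NN MM T n m q ℓ : ℕ} [NeZero T] {P : Matrix (Fin NN) (Fin NN) ℝ}
  {Q : Matrix (Fin MM) (Fin MM) ℝ} {f : Fin MM → Bool}

/-- The state space `𝔛` of the extended chain. -/
abbrev ExtendedState (NN T : ℕ) [NeZero T] {MM : ℕ} (f : Fin MM → Bool) : Type :=
  {χ : XT NN MM T // inX f χ}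

instance : Fintype (ExtendedState NN T f) := Fintype.ofFinite _

theorem Fop_eq_sum (Z : XT NN MM T → XT NN MM T → Matrix (Fin n) (Fin n) ℝ) (χ : XT NN MM T) :
    Fop P Q f Z χ = ∑ χ' : ExtendedState NN T f, pbar P Q f χ χ' • Z χ χ' := by
  classical
  rw [Fop, ← Finset.sum_filter]
  exact Finset.sum_subtype _ (by simp) _

/-- `θ` as a process with values in `𝔛`. -/
def ThetaReal.state (S : ThetaReal NN MM T P Q f) (k : ℕ) (ω : S.Ω) : ExtendedState NN T f :=
  ⟨S.θ k ω, S.mem k ω⟩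

theorem ThetaReal.measurable_state (S : ThetaReal NN MM T P Q f) (k : ℕ) :
    Measurable (S.state k) :=
  (S.meas k).subtype_mk

theorem ThetaReal.isMarkovChain_state (S : ThetaReal NN MM T P Q f) :
    IsMarkovChain S.μ S.state fun χ χ' => pbar P Q f χ.1 χ'.1 :=
  .of_comp_injective Subtype.val_injective S.markov

variable {A : Fin NN → Matrix (Fin n) (Fin n) ℝ} {B : Fin NN → Matrix (Fin n) (Fin m) ℝ}
  {C : Fin NN → Matrix (Fin ℓ) (Fin n) ℝ} {D : Fin NN → Matrix (Fin ℓ) (Fin m) ℝ}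
  {E : Fin NN → Matrix (Fin n) (Fin q) ℝ} {K : Fin NN → Fin T → Matrix (Fin m) (Fin n) ℝ}
  {γ ε : ℝ} {V : ExtendedState NN T f → (Fin n → ℝ) → ℝ}

/-- `V` is a storage function for `Σ̄_K`, regarded as a jump linear system with modes in `𝔛`. -/
abbrev IsStorageFunctionBar (P : Matrix (Fin NN) (Fin NN) ℝ) (Q : Matrix (Fin MM) (Fin MM) ℝ)
    (f : Fin MM → Bool) (A : Fin NN → Matrix (Fin n) (Fin n) ℝ)
    (B : Fin NN → Matrix (Fin n) (Fin m) ℝ) (C : Fin NN → Matrix (Fin ℓ) (Fin n) ℝ)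
    (D : Fin NN → Matrix (Fin ℓ) (Fin m) ℝ) (E : Fin NN → Matrix (Fin n) (Fin q) ℝ)
    (K : Fin NN → Fin T → Matrix (Fin m) (Fin n) ℝ) (γ ε : ℝ)
    (V : ExtendedState NN T f → (Fin n → ℝ) → ℝ) : Prop :=
  IsStorageFunction (fun χ χ' => pbar P Q f χ.1 χ'.1) (AKmat A B K ∘ Subtype.val)
    ((fun χ => E χ.1) ∘ Subtype.val) (CKmat C D K ∘ Subtype.val) γ ε V

theorem IsStorageFunctionBar.meanSquareStableBar
    (hV : IsStorageFunctionBar P Q f A B C D E K γ ε V)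
    (hε : 0 < ε) (hε1 : ε ≤ 1) (hεγ : ε ≤ γ) (hP : ∀ i j, 0 ≤ P i j) (hQ : ∀ i j, 0 ≤ Q i j) :
    MeanSquareStableBar P Q f A B E K := by
  refine ⟨ε⁻¹ * ε⁻¹, by positivity, 1 - ε, by linarith, by linarith, fun S _ _ _ x₀ k => ?_⟩
  have bound := hV.lintegral_sqE_traj_le hε hε1 hεγ (fun _ _ => pbar_nonneg hP hQ _ _)
    S.measurable_state S.isMarkovChain_state x₀ k
  simp only [traj_comp, dotProduct, ← sq] at bound ⊢
  exact bound

theorem IsStorageFunctionBar.hinfSqLtBar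
    (hV : IsStorageFunctionBar P Q f A B C D E K γ ε V)
    (hε : 0 < ε) (hε1 : ε ≤ 1) (hεγ : ε ≤ γ) (hP : ∀ i j, 0 ≤ P i j) (hQ : ∀ i j, 0 ≤ Q i j) :
    HinfSqLtBar P Q f A B C D E K γ := by
  refine ⟨γ - ε, by linarith, by linarith, fun S _ _ _ w hw _ _ => ?_⟩
  have adapted k : (w k).FactorsThrough (history S.state k) := fun ω ω' hω =>
    (measurable_sigFiltBar_iff S).1 (hw k) <| history_eq_history_iff.2 fun l hl =>
      congrArg Subtype.val (history_eq_history_iff.1 hω l hl)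
  have bound := hV.tsum_lintegral_sqE_output_le hε hε1 hεγ (fun _ _ => pbar_nonneg hP hQ _ _)
    S.measurable_state S.isMarkovChain_state adapted
  simp only [traj_comp] at bound
  exact bound

end ExtendedState

/-! ### Existence of storage functions -/

section StrictDissipation

open Filter Topology

section QuadraticForm

variable {F : Type*} [NormedAddCommGroup F] [NormedSpace ℝ F] [FiniteDimensional ℝ F]

theorem continuous_quadraticForm (Q : QuadraticForm ℝ F) : Continuous Q := by
  have : Continuous fun x => (QuadraticMap.associated Q).toContinuousBilinearMap x x := by fun_prop
  simpa [QuadraticMap.associated_eq_self_apply] using this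

theorem eventually_forall_mul_le_of_posDef {Q : QuadraticForm ℝ F} (hQ : Q.PosDef)
    (Q' : QuadraticForm ℝ F) : ∀ᶠ ε in 𝓝 (0 : ℝ), ∀ x, ε * Q' x ≤ Q x := by
  have := FiniteDimensional.proper ℝ F
  have on_sphere : ∀ᶠ ε in 𝓝 (0 : ℝ), ∀ x ∈ Metric.sphere (0 : F) 1, ε * Q' x < Q x := by
    refine (isCompact_sphere 0 1).eventually_forall_of_forall_eventually fun x hx => ?_
    refine (isOpen_lt (continuous_fst.mul ((continuous_quadraticForm Q').comp continuous_snd))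
      ((continuous_quadraticForm Q).comp continuous_snd)).eventually_mem ?_
    simpa using hQ x (ne_zero_of_mem_unit_sphere ⟨x, hx⟩)
  filter_upwards [on_sphere] with ε hε x
  rcases eq_or_ne x 0 with rfl | hx
  · simp
  have unit := hε (‖x‖⁻¹ • x) (by simp [norm_smul, hx])
  have scale_pos : 0 < ‖x‖⁻¹ * ‖x‖⁻¹ := by positivity
  rw [QuadraticMap.map_smul, QuadraticMap.map_smul, smul_eq_mul, smul_eq_mul, mul_left_comm,
    mul_lt_mul_iff_right₀ scale_pos] at unit
  exact unit.le

end QuadraticForm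

section StorageFunction

variable {S : Type} [Fintype S] {n q ℓ : ℕ} {p : S → S → ℝ} {A : S → Matrix (Fin n) (Fin n) ℝ}
  {E : S → Matrix (Fin n) (Fin q) ℝ} {C : S → Matrix (Fin ℓ) (Fin n) ℝ} {γ : ℝ}
  {V : S → QuadraticForm ℝ (Fin n → ℝ)}

/-- The quadratic form `(x, w) ↦ V i x + γ ‖w‖² - ∑ j, p i j * V j (A i x + E i w) - ‖C i x‖²`. -/
def dissipationForm (p : S → S → ℝ) (A : S → Matrix (Fin n) (Fin n) ℝ)
    (E : S → Matrix (Fin n) (Fin q) ℝ) (C : S → Matrix (Fin ℓ) (Fin n) ℝ) (γ : ℝ)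
    (V : S → QuadraticForm ℝ (Fin n → ℝ)) (i : S) :
    QuadraticForm ℝ ((Fin n → ℝ) × (Fin q → ℝ)) :=
  QuadraticMap.prod (V i) (γ • (1 : Matrix (Fin q) (Fin q) ℝ).toQuadraticForm')
    - ∑ j, p i j • (V j).comp ((A i).mulVecLin.coprod (E i).mulVecLin)
    - (1 : Matrix (Fin ℓ) (Fin ℓ) ℝ).toQuadraticForm'.comp
        ((C i).mulVecLin ∘ₗ LinearMap.fst ℝ _ _)

theorem toQuadraticForm'_one_apply {d : ℕ} (v : Fin d → ℝ) :
    (1 : Matrix (Fin d) (Fin d) ℝ).toQuadraticForm' v = v ⬝ᵥ v := by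
  simp [toQuadraticForm', toLinearMap₂'_apply']

theorem dissipationForm_apply (i : S) (x : Fin n → ℝ) (w : Fin q → ℝ) :
    dissipationForm p A E C γ V i (x, w) = V i x + γ * (w ⬝ᵥ w)
      - ∑ j, p i j * V j (A i *ᵥ x + E i *ᵥ w) - C i *ᵥ x ⬝ᵥ C i *ᵥ x := by
  simp [dissipationForm, toQuadraticForm'_one_apply]

theorem exists_isStorageFunction (hV : ∀ i, (V i).PosDef) (hγ : 0 < γ)
    (h : ∀ i, (dissipationForm p A E C γ V i).PosDef) :
    ∃ ε, 0 < ε ∧ ε ≤ 1 ∧ ε ≤ γ ∧ IsStorageFunction p A E C γ ε fun i => V i := by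
  let sq (d : ℕ) : QuadraticForm ℝ (Fin d → ℝ) := (1 : Matrix (Fin d) (Fin d) ℝ).toQuadraticForm'
  have sq_posDef (d) : (sq d).PosDef := PosDef.one.toQuadraticForm'
  have lower := eventually_all.2 fun i => eventually_forall_mul_le_of_posDef (hV i) (sq n)
  have upper := eventually_all.2 fun i => eventually_forall_mul_le_of_posDef (sq_posDef n) (V i)
  have margin := eventually_all.2 fun i =>
    eventually_forall_mul_le_of_posDef (h i) (QuadraticMap.prod (V i) (sq q))
  have small : ∀ᶠ ε in 𝓝[>] (0 : ℝ), 0 < ε ∧ ε ≤ 1 ∧ ε ≤ γ :=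
    eventually_mem_nhdsWithin.and <| ((eventually_le_nhds one_pos).and
      (eventually_le_nhds hγ)).filter_mono nhdsWithin_le_nhds
  obtain ⟨ε, ⟨lower, upper, margin⟩, hε, hε1, hεγ⟩ :=
    (((lower.and (upper.and margin)).filter_mono nhdsWithin_le_nhds).and small).exists
  refine ⟨ε, hε, hε1, hεγ, fun i x => ?_, fun i x => ?_, fun i x w => ?_⟩
  · simpa only [sq, toQuadraticForm'_one_apply] using lower i x
  · simpa only [sq, toQuadraticForm'_one_apply] using upper i x
  · have := margin i (x, w)
    rw [QuadraticMap.prod_apply, toQuadraticForm'_one_apply, dissipationForm_apply] at this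
    linarith

end StorageFunction

end StrictDissipation

/-! ### The linear matrix inequalities -/

section MatrixInequalities

variable {ι κ : Type*}

theorem posDef_of_fromBlocks {A : Matrix κ κ ℝ} {B : Matrix κ ι ℝ} {C : Matrix ι κ ℝ}
    {D : Matrix ι ι ℝ} (h : (fromBlocks A B C D).PosDef) : D.PosDef :=
  h.submatrix Sum.inr_injective

variable [Fintype ι]

theorem two_mul_dotProduct_sub_le [DecidableEq ι] {X : Matrix ι ι ℝ} (hX : X.PosDef) (u x : ι → ℝ) :
    2 * (u ⬝ᵥ x) - u ⬝ᵥ X *ᵥ u ≤ x ⬝ᵥ X⁻¹ *ᵥ x := by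
  have cancel : X *ᵥ X⁻¹ *ᵥ x = x := by
    rw [mulVec_mulVec, mul_nonsing_inv _ ((isUnit_iff_isUnit_det X).1 hX.isUnit), one_mulVec]
  have symm : X⁻¹ *ᵥ x ⬝ᵥ X *ᵥ u = u ⬝ᵥ x := by
    rw [← dotProduct_transpose_mulVec, ← conjTranspose_eq_transpose_of_trivial,
      hX.isHermitian.eq, cancel]
  have square : 0 ≤ (u - X⁻¹ *ᵥ x) ⬝ᵥ X *ᵥ (u - X⁻¹ *ᵥ x) := by
    simpa using hX.posSemidef.dotProduct_mulVec_nonneg (u - X⁻¹ *ᵥ x)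
  rw [mulVec_sub, cancel, sub_dotProduct, dotProduct_sub, dotProduct_sub, symm,
    dotProduct_comm (X⁻¹ *ᵥ x) x] at square
  linarith

theorem mulVec_surjective_of_posDef {G X : Matrix ι ι ℝ} (hX : X.PosSemidef)
    (h : (G + Gᵀ - X).PosDef) : Function.Surjective G.mulVec := by
  classical
  refine mulVec_surjective_iff_isUnit.2 (mulVec_injective_iff_isUnit.1 ?_)
  refine (injective_iff_map_eq_zero G.mulVecLin).2 fun u (hu : G *ᵥ u = 0) => ?_
  by_contra hu0
  have pos := h.dotProduct_mulVec_pos hu0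
  have nonneg := hX.dotProduct_mulVec_nonneg u
  simp only [star_trivial, sub_mulVec, add_mulVec, dotProduct_sub, dotProduct_add,
    dotProduct_transpose_mulVec, hu, dotProduct_zero] at pos nonneg
  linarith

theorem dotProduct_inv_mulVec_le_of_fromBlocks [DecidableEq ι] [Fintype κ]
    {Z : Matrix κ κ ℝ} {H : Matrix ι κ ℝ} {X : Matrix ι ι ℝ}
    (h : (fromBlocks Z Hᵀ H X).PosDef) (v : κ → ℝ) :
    H *ᵥ v ⬝ᵥ X⁻¹ *ᵥ H *ᵥ v ≤ v ⬝ᵥ Z *ᵥ v := by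
  have hX := posDef_of_fromBlocks h
  let := hX.isUnit.invertible
  have schur : (Z - Hᵀ * X⁻¹ * H).PosSemidef := by
    simpa using (PosDef.fromBlocks₂₂ Z Hᵀ hX).1 (by simpa using h.posSemidef)
  have := schur.dotProduct_mulVec_nonneg v
  simp only [star_trivial, sub_mulVec, dotProduct_sub, ← mulVec_mulVec,
    dotProduct_transpose_mulVec, sub_nonneg] at this
  rwa [dotProduct_comm] at this

end MatrixInequalities

section HinfBlock

variable {n q ℓ : ℕ} {γ : ℝ}

theorem hinfBlock_quadratic (γ : ℝ) (D1 D3 B31 : Matrix (Fin n) (Fin n) ℝ)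
    (B32 : Matrix (Fin n) (Fin q) ℝ) (B41 : Matrix (Fin ℓ) (Fin n) ℝ) (u v : Fin n → ℝ)
    (w : Fin q → ℝ) (z : Fin ℓ → ℝ) :
    Sum.elim (Sum.elim u w) (Sum.elim v z) ⬝ᵥ
        hinfBlock γ D1 D3 B31 B32 B41 *ᵥ Sum.elim (Sum.elim u w) (Sum.elim v z)
      = u ⬝ᵥ D1 *ᵥ u + γ * (w ⬝ᵥ w) + v ⬝ᵥ D3 *ᵥ v + z ⬝ᵥ z
        + 2 * (v ⬝ᵥ B31 *ᵥ u) + 2 * (v ⬝ᵥ B32 *ᵥ w) + 2 * (z ⬝ᵥ B41 *ᵥ u) := by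
  simp only [hinfBlock, fromBlocks_mulVec, sumElim_dotProduct_sumElim, Sum.elim_comp_inl,
    Sum.elim_comp_inr, zero_mulVec, add_zero, zero_add, smul_mulVec, one_mulVec, dotProduct_add,
    dotProduct_smul, smul_eq_mul, dotProduct_transpose_mulVec, Sum.elim_add_add]
  ring

variable {S : Type*} [Fintype S] {p : S → ℝ} {G H X A : Matrix (Fin n) (Fin n) ℝ}
  {E : Matrix (Fin n) (Fin q) ℝ} {C : Matrix (Fin ℓ) (Fin n) ℝ}
  {X' Z : S → Matrix (Fin n) (Fin n) ℝ}

theorem expected_storage_le (hp : ∀ j, 0 ≤ p j)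
    (hZ : ∀ j, (fromBlocks (Z j) Hᵀ H (X' j)).PosDef) (v : Fin n → ℝ) :
    ∑ j, p j * (H *ᵥ v ⬝ᵥ (X' j)⁻¹ *ᵥ H *ᵥ v) ≤ v ⬝ᵥ (∑ j, p j • Z j) *ᵥ v := by
  rw [sum_mulVec, dotProduct_sum]
  refine Finset.sum_le_sum fun j _ => ?_
  rw [smul_mulVec, dotProduct_smul, smul_eq_mul]
  exact mul_le_mul_of_nonneg_left (dotProduct_inv_mulVec_le_of_fromBlocks (hZ j) v) (hp j)

/- The congruence `x = G u`, `H v = -(A x + E w)`, `z = -C x` turns the block matrix inequality into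
the dissipation inequality. -/
theorem dissipation_of_hinfBlock_posDef (hp : ∀ j, 0 ≤ p j) (hX : X.PosDef)
    (h : (hinfBlock γ (G + Gᵀ - X) (H + Hᵀ - ∑ j, p j • Z j) (A * G) E (C * G)).PosDef)
    (hZ : ∀ j, (fromBlocks (Z j) Hᵀ H (X' j)).PosDef) {x : Fin n → ℝ} {w : Fin q → ℝ}
    (hxw : (x, w) ≠ 0) :
    ∑ j, p j * ((A *ᵥ x + E *ᵥ w) ⬝ᵥ (X' j)⁻¹ *ᵥ (A *ᵥ x + E *ᵥ w)) + C *ᵥ x ⬝ᵥ C *ᵥ x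
      < x ⬝ᵥ X⁻¹ *ᵥ x + γ * (w ⬝ᵥ w) := by
  have hF : (∑ j, p j • Z j).PosSemidef := by
    refine posSemidef_sum _ fun j _ => ?_
    exact PosSemidef.smul ((hZ j).submatrix Sum.inl_injective).posSemidef (hp j)
  obtain ⟨u, rfl⟩ : ∃ u, G *ᵥ u = x := mulVec_surjective_of_posDef hX.posSemidef
    (h.submatrix (e := Sum.inl ∘ Sum.inl) (Sum.inl_injective.comp Sum.inl_injective)) x
  obtain ⟨v, hv⟩ : ∃ v, H *ᵥ v = -(A *ᵥ G *ᵥ u + E *ᵥ w) := mulVec_surjective_of_posDef hF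
    (h.submatrix (e := Sum.inr ∘ Sum.inl) (Sum.inr_injective.comp Sum.inl_injective)) _
  have block_pos := h.dotProduct_mulVec_pos
    (x := Sum.elim (Sum.elim u w) (Sum.elim v (-(C *ᵥ G *ᵥ u)))) fun h0 => hxw <| by
      have hu : u = 0 := funext fun i => congrFun h0 (.inl (.inl i))
      have hw : w = 0 := funext fun i => congrFun h0 (.inl (.inr i))
      simp [hu, hw]
  have young := two_mul_dotProduct_sub_le hX u (G *ᵥ u)
  have storage := expected_storage_le hp hZ v
  rw [star_trivial, hinfBlock_quadratic] at block_pos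
  simp only [hv, add_mulVec, sub_mulVec, dotProduct_add, dotProduct_sub, mulVec_neg,
    neg_dotProduct, dotProduct_neg, neg_neg, dotProduct_transpose_mulVec,
    ← mulVec_mulVec] at block_pos storage ⊢
  linarith

end HinfBlock

section ClosedLoop

variable {NN MM T n m q ℓ : ℕ} [NeZero T] {P : Matrix (Fin NN) (Fin NN) ℝ}
  {Q : Matrix (Fin MM) (Fin MM) ℝ} {f : Fin MM → Bool} {A : Fin NN → Matrix (Fin n) (Fin n) ℝ}
  {B : Fin NN → Matrix (Fin n) (Fin m) ℝ} {C : Fin NN → Matrix (Fin ℓ) (Fin n) ℝ}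
  {D : Fin NN → Matrix (Fin ℓ) (Fin m) ℝ} {E : Fin NN → Matrix (Fin n) (Fin q) ℝ}
  {K : Fin NN → Fin T → Matrix (Fin m) (Fin n) ℝ} {γ : ℝ}

theorem exists_isStorageFunctionBar (hP : ∀ i j, 0 ≤ P i j) (hQ : ∀ i j, 0 ≤ Q i j) (hγ : 0 < γ)
    {G H X : XT NN MM T → Matrix (Fin n) (Fin n) ℝ}
    {Z : XT NN MM T → XT NN MM T → Matrix (Fin n) (Fin n) ℝ}
    (h : ∀ χ χ' : XT NN MM T, inX f χ → inX f χ' →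
      (hinfBlock γ (G χ + (G χ)ᵀ - X χ) (H χ + (H χ)ᵀ - Fop P Q f Z χ)
        (AKmat A B K χ * G χ) (E χ.1) (CKmat C D K χ * G χ)).PosDef ∧
      (fromBlocks (Z χ χ') (H χ)ᵀ (H χ) (X χ')).PosDef) :
    ∃ ε, 0 < ε ∧ ε ≤ 1 ∧ ε ≤ γ ∧ ∃ V, IsStorageFunctionBar P Q f A B C D E K γ ε V := by
  have hX (χ : ExtendedState NN T f) : (X χ).PosDef := posDef_of_fromBlocks (h χ χ χ.2 χ.2).2
  have hV (χ : ExtendedState NN T f) : (X χ)⁻¹.toQuadraticForm'.PosDef :=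
    (hX χ).inv.toQuadraticForm'
  obtain ⟨ε, hε, hε1, hεγ, storage⟩ := exists_isStorageFunction hV hγ
    (p := fun χ χ' => pbar P Q f χ.1 χ'.1) (A := AKmat A B K ∘ Subtype.val)
    (E := (fun χ => E χ.1) ∘ Subtype.val) (C := CKmat C D K ∘ Subtype.val)
    fun χ ⟨x, w⟩ hxw => by
      have block := (h χ χ χ.2 χ.2).1
      rw [Fop_eq_sum] at block
      have := dissipation_of_hinfBlock_posDef (fun _ => pbar_nonneg hP hQ _ _) (hX χ) block
        (fun χ' => (h χ χ' χ.2 χ'.2).2) hxw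
      simp only [dissipationForm_apply, toQuadraticForm', LinearMap.BilinMap.toQuadraticMap_apply,
        toLinearMap₂'_apply', Function.comp_apply]
      linarith
  exact ⟨ε, hε, hε1, hεγ, _, storage⟩

end ClosedLoop

/-- (i) `Σ_K` MSS with `‖Σ_K‖∞² < γ` iff (ii) `Σ̄_K` MSS with
`‖Σ̄_K‖∞² < γ`; moreover the LMIs (iii) imply both (i) and (ii). -/
theorem hinf_characterization
    {NN MM T n m q ℓ : ℕ} [NeZero NN] [NeZero MM] [NeZero T]
    [NeZero n] [NeZero m] [NeZero q] [NeZero ℓ]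
    (P : Matrix (Fin NN) (Fin NN) ℝ) (Qm : Matrix (Fin MM) (Fin MM) ℝ)
    (hP0 : ∀ i j, 0 ≤ P i j) (hP1 : ∀ i, ∑ j, P i j = 1)
    (hQ0 : ∀ i j, 0 ≤ Qm i j) (hQ1 : ∀ i, ∑ j, Qm i j = 1)
    (f : Fin MM → Bool)
    (A : Fin NN → Matrix (Fin n) (Fin n) ℝ) (B : Fin NN → Matrix (Fin n) (Fin m) ℝ)
    (C : Fin NN → Matrix (Fin ℓ) (Fin n) ℝ) (D : Fin NN → Matrix (Fin ℓ) (Fin m) ℝ)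
    (E : Fin NN → Matrix (Fin n) (Fin q) ℝ)
    (K : Fin NN → Fin T → Matrix (Fin m) (Fin n) ℝ)
    (γ : ℝ) (hγ : 0 < γ) :
    ((MeanSquareStable P Qm f A B E K ∧ HinfSqLtSigma P Qm f A B C D E K γ)
      ↔ (MeanSquareStableBar P Qm f A B E K ∧ HinfSqLtBar P Qm f A B C D E K γ))
    ∧ ((∃ (G H X : XT NN MM T → Matrix (Fin n) (Fin n) ℝ)
          (Z : XT NN MM T → XT NN MM T → Matrix (Fin n) (Fin n) ℝ),
          ∀ χ χ' : XT NN MM T, inX f χ → inX f χ' →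
            (hinfBlock γ (G χ + (G χ)ᵀ - X χ) (H χ + (H χ)ᵀ - Fop P Qm f Z χ)
              (AKmat A B K χ * G χ) (E χ.1) (CKmat C D K χ * G χ)).PosDef ∧
            (Matrix.fromBlocks (Z χ χ') (H χ)ᵀ (H χ) (X χ')).PosDef) →
        ((MeanSquareStable P Qm f A B E K ∧ HinfSqLtSigma P Qm f A B C D E K γ)
          ∧ (MeanSquareStableBar P Qm f A B E K ∧ HinfSqLtBar P Qm f A B C D E K γ))) := by
  refine ⟨⟨fun ⟨stable, gain⟩ => ⟨stable.meanSquareStableBar hP0 hP1 hQ0 hQ1,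
      gain.hinfSqLtBar hP0 hP1 hQ0 hQ1⟩,
    fun ⟨stable, gain⟩ => ⟨stable.meanSquareStable hP0 hQ0, gain.hinfSqLtSigma hP0 hQ0⟩⟩, ?_⟩
  rintro ⟨G, H, X, Z, lmi⟩
  obtain ⟨ε, hε, hε1, hεγ, V, hV⟩ := exists_isStorageFunctionBar hP0 hQ0 hγ lmi
  have stable := hV.meanSquareStableBar hε hε1 hεγ hP0 hQ0
  have gain := hV.hinfSqLtBar hε hε1 hεγ hP0 hQ0
  exact ⟨⟨stable.meanSquareStable hP0 hQ0, gain.hinfSqLtSigma hP0 hQ0⟩, stable, gain⟩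

end
end

section
/- Let R, Q, G, A be n×n real matrices with R symmetric and Q symmetric positive definite. If the symmetric block matrix [[R, A G],[GᵀAᵀ, G + Gᵀ − Q]] is positive definite, then G is invertible and R − A Q Aᵀ is positive definite. -/
open MeasureTheory ProbabilityTheory Matrix

noncomputable section

/-!
If `G x = 0`, then `x` is isotropic for `G + Gᴴ = (G + Gᴴ - Q) + Q`, which is positive definite;
hence `G` is invertible. Put `P = G⁻¹ Q`. Completing the square,
`Pᴴ (G + Gᴴ - Q) P = Q - (1 - P)ᴴ Q (1 - P)`, so evaluating the quadratic form of the block matrix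
on the graph of `-P Aᴴ` gives `R - A Q Aᴴ` minus a positive semidefinite matrix.
-/

section Ring

variable {K m n : Type*} [Ring K] [StarRing K] [Fintype n]

theorem conjTranspose_mul_add_sub_mul_eq_sub [DecidableEq n] {G P Q : Matrix n n K}
    (hQ : Q.IsHermitian) (hGP : G * P = Q) :
    Pᴴ * (G + Gᴴ - Q) * P = Q - (1 - P)ᴴ * Q * (1 - P) := by
  have hPG : Pᴴ * Gᴴ = Q := by rw [← conjTranspose_mul, hGP, hQ.eq]
  calc Pᴴ * (G + Gᴴ - Q) * P
      = Pᴴ * (G * P) + (Pᴴ * Gᴴ) * P - Pᴴ * Q * P := by noncomm_ring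
    _ = Q - (1 - P)ᴴ * Q * (1 - P) := by
      rw [hGP, hPG, conjTranspose_sub, conjTranspose_one]
      noncomm_ring

variable [PartialOrder K] [Finite m]

theorem posDef_add_mul_of_posDef_fromBlocks {R : Matrix m m K} {B : Matrix m n K}
    {C : Matrix n m K} {D : Matrix n n K} (h : (fromBlocks R B C D).PosDef) (Y : Matrix n m K) :
    (R + B * Y + Yᴴ * C + Yᴴ * D * Y).PosDef := by
  classical
  have := Fintype.ofFinite m
  have graph_injective : Function.Injective (fromRows (1 : Matrix m m K) Y).mulVec := by
    intro x y hxy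
    simp only [fromRows_mulVec, one_mulVec] at hxy
    exact (Sum.elim_eq_iff.mp hxy).1
  convert h.conjTranspose_mul_mul_same graph_injective using 1
  simp only [conjTranspose_fromRows_eq_fromCols_conjTranspose, conjTranspose_one,
    fromCols_mul_fromBlocks, fromCols_mul_fromRows, Matrix.one_mul, Matrix.mul_one, Matrix.add_mul]
  abel

theorem posDef_sub_mul_mul_conjTranspose_of_posDef_fromBlocks [AddLeftMono K]
    {R : Matrix m m K} {A : Matrix m n K} {G P Q : Matrix n n K}
    (hQ : Q.PosSemidef) (hGP : G * P = Q)
    (h : (fromBlocks R (A * G) (A * G)ᴴ (G + Gᴴ - Q)).PosDef) :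
    (R - A * Q * Aᴴ).PosDef := by
  classical
  have compression := posDef_add_mul_of_posDef_fromBlocks h (-(P * Aᴴ))
  have remainder := (hQ.conjTranspose_mul_mul_same (1 - P)).mul_mul_conjTranspose_same A
  have upper : A * G * -(P * Aᴴ) = -(A * Q * Aᴴ) := by
    rw [← hGP]; simp only [Matrix.mul_neg, Matrix.mul_assoc]
  have lower : (-(P * Aᴴ))ᴴ * (A * G)ᴴ = -(A * Q * Aᴴ) := by
    rw [← conjTranspose_mul, upper, conjTranspose_neg,
      (isHermitian_mul_mul_conjTranspose A hQ.isHermitian).eq]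
  have corner : (-(P * Aᴴ))ᴴ * (G + Gᴴ - Q) * -(P * Aᴴ) =
      A * Q * Aᴴ - A * ((1 - P)ᴴ * Q * (1 - P)) * Aᴴ := by
    calc (-(P * Aᴴ))ᴴ * (G + Gᴴ - Q) * -(P * Aᴴ)
        = A * (Pᴴ * (G + Gᴴ - Q) * P) * Aᴴ := by
          simp only [conjTranspose_neg, conjTranspose_mul, conjTranspose_conjTranspose,
            Matrix.neg_mul, Matrix.mul_neg, neg_neg, Matrix.mul_assoc]
      _ = A * Q * Aᴴ - A * ((1 - P)ᴴ * Q * (1 - P)) * Aᴴ := by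
          rw [conjTranspose_mul_add_sub_mul_eq_sub hQ.isHermitian hGP, Matrix.mul_sub,
            Matrix.sub_mul]
  rw [upper, lower, corner] at compression
  convert compression.add_posSemidef remainder using 1
  abel

end Ring

section Field

variable {K m n : Type*} [Field K] [PartialOrder K] [StarRing K] [Fintype n] [DecidableEq n]

theorem isUnit_of_posDef_add_conjTranspose {G : Matrix n n K} (h : (G + Gᴴ).PosDef) :
    IsUnit G := by
  rw [← mulVec_injective_iff_isUnit, ← coe_mulVecLin, injective_iff_map_eq_zero]
  intro x hx
  by_contra hx_ne
  rw [mulVecLin_apply] at hx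
  have form_eq_zero : star x ⬝ᵥ ((G + Gᴴ) *ᵥ x) = 0 := by
    rw [add_mulVec, dotProduct_add, hx, dotProduct_mulVec (star x) Gᴴ, ← star_mulVec, hx,
      star_zero, dotProduct_zero, zero_dotProduct, add_zero]
  exact (h.dotProduct_mulVec_pos hx_ne).ne' form_eq_zero

theorem block_posdef_schur_general [AddLeftMono K] [Finite m] {R : Matrix m m K}
    {A : Matrix m n K} {G Q : Matrix n n K} (hQ : Q.PosSemidef)
    (h : (fromBlocks R (A * G) (A * G)ᴴ (G + Gᴴ - Q)).PosDef) :
    IsUnit G ∧ (R - A * Q * Aᴴ).PosDef := by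
  have corner_posDef : (G + Gᴴ - Q).PosDef := h.submatrix (e := Sum.inr) Sum.inr_injective
  have sum_posDef : (G + Gᴴ).PosDef := by
    simpa only [sub_add_cancel] using corner_posDef.add_posSemidef hQ
  have hG : IsUnit G := isUnit_of_posDef_add_conjTranspose sum_posDef
  have hGP : G * (G⁻¹ * Q) = Q :=
    mul_nonsing_inv_cancel_left G Q ((isUnit_iff_isUnit_det G).mp hG)
  exact ⟨hG, posDef_sub_mul_mul_conjTranspose_of_posDef_fromBlocks hQ hGP h⟩

end Field

/-- if `[[R, A G],[GᵀAᵀ, G + Gᵀ − Q]] > 0` with `R` symmetric and `Q`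
symmetric positive definite, then `G` is invertible and `R − A Q Aᵀ > 0`. -/
theorem block_posdef_schur
    {n : ℕ} (R Q G A : Matrix (Fin n) (Fin n) ℝ)
    (hR : R.IsHermitian) (hQ : Q.PosDef)
    (h : (Matrix.fromBlocks R (A * G) (A * G)ᵀ (G + Gᵀ - Q)).PosDef) :
    IsUnit G ∧ (R - A * Q * Aᵀ).PosDef := by
  simp only [← conjTranspose_eq_transpose_of_trivial] at h ⊢
  exact block_posdef_schur_general hQ.posSemidef h

end
end
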